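/- Let 𝒲 be a Banach space with a Schauder basis and let α be a countable ordinal. Then there is a block subspace 𝒳 = [x_n] ⊆ 𝒲 that is either ω·α-tight or (α+1)-minimal. -/

import Mathlib

open Filter Topology

namespace Rosendal

variable {𝒲 : Type} [NormedAddCommGroup 𝒲] [NormedSpace ℝ 𝒲]

/-- `(e n)` is a Schauder basis of the Banach space `𝒲`: every vector has a unique
representation as a norm-convergent series `∑ a n • e n`. -/
def IsSchauderBasis (e : ℕ → 𝒲) : Prop :=
  ∀ x : 𝒲, ∃! a : ℕ → ℝ,
    Tendsto (fun N => ∑ i ∈ Finset.range N, a i • e i) atTop (𝓝 x)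

/-- `x` is a linear combination of the vectors `b i`, `i ∈ s`. -/
def SuppIn (b : ℕ → 𝒲) (x : 𝒲) (s : Finset ℕ) : Prop :=
  ∃ a : ℕ → ℝ, x = ∑ i ∈ s, a i • b i

/-- `(y n)` is a block sequence with respect to the basic sequence `(b n)`: a sequence of
nonzero finite linear combinations of the `b i` with successive supports. -/
def IsBlockSeq (b : ℕ → 𝒲) (y : ℕ → 𝒲) : Prop :=
  (∀ n, y n ≠ 0) ∧
  ∃ D : ℕ → Finset ℕ, (∀ n, SuppIn b (y n) (D n)) ∧
    ∀ n, ∀ i ∈ D n, ∀ j ∈ D (n + 1), i < j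

/-- The closed linear span of a set. -/
noncomputable def closedSpan (S : Set 𝒲) : Submodule ℝ 𝒲 :=
  (Submodule.span ℝ S).topologicalClosure

/-- `(x i)_{i<k} ∼_K (y i)_{i<k}`:
`(1/K)‖∑ a i • x i‖ ≤ ‖∑ a i • y i‖ ≤ K‖∑ a i • x i‖` for all scalars. -/
def SeqEquiv (K : ℝ) (k : ℕ) (x y : ℕ → 𝒲) : Prop :=
  ∀ a : ℕ → ℝ,
    (1 / K) * ‖∑ i ∈ Finset.range k, a i • x i‖ ≤ ‖∑ i ∈ Finset.range k, a i • y i‖ ∧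
    ‖∑ i ∈ Finset.range k, a i • y i‖ ≤ K * ‖∑ i ∈ Finset.range k, a i • x i‖

/-- The tree `T((x n), Y, K)` of finite sequences `(y 0, …, y k)` of vectors of `Y` that are
`K`-equivalent to `(x 0, …, x k)`, ordered by end-extension. -/
def embTree (x : ℕ → 𝒲) (Y : Set 𝒲) (K : ℝ) : Set (List 𝒲) :=
  {l | (∀ v ∈ l, v ∈ Y) ∧ SeqEquiv K l.length (fun i => l.getD i 0) x}

open Classical in
/-- The rank of a tree of finite sequences: if the proper end-extension relation is
well-founded (equivalently, for trees, there is no infinite branch), this is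
`sup { ρ(s) + 1 : s ∈ T }` where `ρ` is the usual rank function; otherwise it is `∞ = ⊤`. -/
noncomputable def treeRank (T : Set (List 𝒲)) : WithTop Ordinal :=
  if h : WellFounded (fun t s : T => s.val <+: t.val ∧ s.val ≠ t.val) then
    ((⨆ s : T, Order.succ ((h.apply s).rank) : Ordinal) : WithTop Ordinal)
  else ⊤

open Classical in
/-- The embeddability index `Emb((x n), Y) = sup_{K ≥ 1} rank T((x n), Y, K)`. -/
noncomputable def embIndex (x : ℕ → 𝒲) (Y : Set 𝒲) : WithTop Ordinal :=
  if ∃ K : ℝ, 1 ≤ K ∧ treeRank (embTree x Y K) = ⊤ then ⊤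
  else ((sSup {o : Ordinal | ∃ K : ℝ, 1 ≤ K ∧
      (o : WithTop Ordinal) = treeRank (embTree x Y K)} : Ordinal) : WithTop Ordinal)

/-- `(I m)` is a sequence of successive nonempty finite intervals `I 0 < I 1 < …` of `ℕ`. -/
def IntervalSeq (I : ℕ → Finset ℕ) : Prop :=
  (∀ m, ∃ a b : ℕ, a ≤ b ∧ I m = Finset.Icc a b) ∧
  ∀ m, ∀ i ∈ I m, ∀ j ∈ I (m + 1), i < j

/-- The closed subspace `[b n : n ∉ ⋃_{m ∈ A} I m]`. -/
noncomputable def residualSpace (b : ℕ → 𝒲) (I : ℕ → Finset ℕ) (A : Set ℕ) :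
    Submodule ℝ 𝒲 :=
  closedSpan {v | ∃ n : ℕ, (∀ m ∈ A, n ∉ I m) ∧ v = b n}

/-- The space `[b n]` with its basis `(b n)` is `α`-tight. -/
def IsAlphaTight (b : ℕ → 𝒲) (α : Ordinal) : Prop :=
  ∀ y : ℕ → 𝒲, IsBlockSeq b y →
    ∃ I : ℕ → Finset ℕ, IntervalSeq I ∧
      ∀ A : Set ℕ, A.Infinite →
        embIndex y (residualSpace b I A : Set 𝒲) ≤ (α : WithTop Ordinal)

/-- The space `[b n]` with its basis `(b n)` is `α`-minimal: every block subspace `[z n]`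
`α`-embeds into every infinite-dimensional subspace `Y ⊆ [b n]`. -/
def IsAlphaMinimal (b : ℕ → 𝒲) (α : Ordinal) : Prop :=
  ∀ z : ℕ → 𝒲, IsBlockSeq b z →
    ∀ Y : Submodule ℝ 𝒲, (Y : Set 𝒲) ⊆ (closedSpan (Set.range b) : Set 𝒲) →
      ¬FiniteDimensional ℝ Y →
        (α : WithTop Ordinal) ≤ embIndex z (Y : Set 𝒲)

/-- `X` embeds isomorphically into `Y` (as an isomorphism onto its image). -/
def LinIsoEmbeds (X Y : Submodule ℝ 𝒲) : Prop :=
  ∃ T : X →ₗ[ℝ] 𝒲, (∀ v : X, T v ∈ Y) ∧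
    ∃ c C : ℝ, 0 < c ∧ ∀ v : X, c * ‖v‖ ≤ ‖T v‖ ∧ ‖T v‖ ≤ C * ‖v‖

/-- `X` is a minimal space: it embeds isomorphically into every infinite-dimensional
closed subspace of itself. -/
def IsMinimalSpace (X : Submodule ℝ 𝒲) : Prop :=
  ∀ Y : Submodule ℝ 𝒲, Y ≤ X → IsClosed (Y : Set 𝒲) → ¬FiniteDimensional ℝ Y →
    LinIsoEmbeds X Y

/-- `F` embeds into `Y` with constant `K`. -/
def KEmbeds (K : ℝ) (F Y : Submodule ℝ 𝒲) : Prop :=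
  ∃ T : F →ₗ[ℝ] 𝒲, (∀ v : F, T v ∈ Y) ∧
    ∀ v : F, (1 / K) * ‖v‖ ≤ ‖T v‖ ∧ ‖T v‖ ≤ K * ‖v‖

end Rosendal

/-!
The rank of an embedding tree measures the largest ordinal clock with which a player can keep
extending an embedding: at each turn the opponent lowers the clock, and the player answers with a
longer sequence.  The game is played on the countable `ℚ`-space of finite rational combinations of
the basis, with countably many positions; perturbation passes to real vectors.

Suppose that no block subspace is `ω·α`-tight, and let `y` witness this for `[x n]`.  Consider the
*tail game*, in which the opponent also announces how far out the new images must lie.  There is a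
function `B` such that, at a position whose images lie before `n`, it is enough to answer the demand
`B n`.  Removing infinitely many of the intervals `[n, B n]` from `x` leaves a space into which `y`
embeds with clock `ω·α`.  Between clocks `ω·(η+1)` and `ω·η` the player can make any finite number
of extensions, hence reach a prescribed length and regard everything up to the next gap as one
answer; so the player wins the tail game with clock `α`.

Since there are countably many positions and countably many clocks up to `α`, a diagonalisation
gives `X` such that, from every position, the same wins are available in all block subspaces of `X`.
Given such a `W`, the player runs two games at once: a tail game embedding some `Y` into `X`, whose
images become the challenges of a second run that answers inside `W`.  Composing the two embeddings
wins, with clock `α`, the game of embedding `Y` into every `W ≤ Y`, so all the embedding trees have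
rank greater than `α`.
-/

namespace Rosendal

/-! ### Clocked games and tree ranks -/

universe u

/-- A two-player game with positions `P` in which the first player repeatedly poses a challenge
from `C` and the second player answers by moving to a new position; the second player loses on
reaching a position that is not `Good`. Its length is bounded by an ordinal clock, see
`ClockedGame.Wins`. -/
structure ClockedGame (P C : Type*) where
  Good : P → Prop
  Reply : P → C → P → Prop

namespace ClockedGame

variable {P C Q D : Type*} {Γ : ClockedGame P C} {Δ : ClockedGame Q D}

/-- The second player wins from `p` when, with each challenge, the first player must also decrease
the clock, which starts at `ξ`. -/
def Wins (Γ : ClockedGame P C) (ξ : Ordinal.{u}) (p : P) : Prop :=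
  Γ.Good p ∧ ∀ η < ξ, ∀ c, ∃ p', Γ.Reply p c p' ∧ Γ.Wins η p'
termination_by ξ

theorem wins_iff {ξ : Ordinal.{u}} {p : P} :
    Γ.Wins ξ p ↔ Γ.Good p ∧ ∀ η < ξ, ∀ c, ∃ p', Γ.Reply p c p' ∧ Γ.Wins η p' := by
  rw [Wins]

theorem Wins.good {ξ : Ordinal.{u}} {p : P} (h : Γ.Wins ξ p) : Γ.Good p :=
  (wins_iff.1 h).1

theorem Wins.exists_reply {ξ η : Ordinal.{u}} {p : P} (h : Γ.Wins ξ p) (hη : η < ξ) (c : C) :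
    ∃ p', Γ.Reply p c p' ∧ Γ.Wins η p' :=
  (wins_iff.1 h).2 η hη c

theorem Wins.of_le {ξ η : Ordinal.{u}} {p : P} (h : Γ.Wins ξ p) (hη : η ≤ ξ) : Γ.Wins η p :=
  wins_iff.2 ⟨h.good, fun _ hζ c => h.exists_reply (hζ.trans_le hη) c⟩

theorem wins_of_invariant (Ψ : Ordinal.{u} → P → Prop) (good : ∀ ξ p, Ψ ξ p → Γ.Good p)
    (reply : ∀ ξ p, Ψ ξ p → ∀ η < ξ, ∀ c, ∃ p', Γ.Reply p c p' ∧ Ψ η p')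
    {ξ : Ordinal.{u}} {p : P} (h : Ψ ξ p) : Γ.Wins ξ p := by
  induction ξ using WellFoundedLT.induction generalizing p with
  | _ ξ ih =>
    refine wins_iff.2 ⟨good ξ p h, fun η hη c => ?_⟩
    obtain ⟨p', hp', hΨ⟩ := reply ξ p h η hη c
    exact ⟨p', hp', ih η hη hΨ⟩

theorem Wins.simulate (Sim : P → Q → Prop) (good : ∀ p q, Sim p q → Γ.Good p → Δ.Good q)
    (reply : ∀ p q, Sim p q → ∀ d, ∃ c, ∀ p', Γ.Reply p c p' → ∃ q', Δ.Reply q d q' ∧ Sim p' q')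
    {ξ : Ordinal.{u}} {p : P} {q : Q} (hpq : Sim p q) (h : Γ.Wins ξ p) : Δ.Wins ξ q := by
  refine wins_of_invariant (fun ξ q => ∃ p, Sim p q ∧ Γ.Wins ξ p) ?_ ?_ ⟨p, hpq, h⟩
  · rintro ξ q ⟨p, hpq, hp⟩
    exact good p q hpq hp.good
  · rintro ξ q ⟨p, hpq, hp⟩ η hη d
    obtain ⟨c, hc⟩ := reply p q hpq d
    obtain ⟨p', hp', hwin⟩ := hp.exists_reply hη c
    obtain ⟨q', hq', hsim⟩ := hc p' hp'
    exact ⟨q', hq', p', hsim, hwin⟩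

-- At a position that is lost for some clock, play the winning challenge for the least such clock.
theorem exists_universal_challenge [Nonempty C] (Γ : ClockedGame P C) :
    ∃ κ : P → C, ∀ (ξ : Ordinal.{u}) (p : P), Γ.Good p →
      (∀ η < ξ, ∃ p', Γ.Reply p (κ p) p' ∧ Γ.Wins η p') → Γ.Wins ξ p := by
  suffices H : ∀ p, ∃ c, ∀ ξ : Ordinal.{u}, Γ.Good p →
      (∀ η < ξ, ∃ p', Γ.Reply p c p' ∧ Γ.Wins η p') → Γ.Wins ξ p by
    choose κ hκ using H
    exact ⟨κ, fun ξ p => hκ p ξ⟩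
  intro p
  by_cases hwins : ∀ ξ : Ordinal.{u}, Γ.Wins ξ p
  · exact ⟨Classical.arbitrary C, fun ξ _ _ => hwins ξ⟩
  · obtain ⟨ζ, hζ, hmin⟩ := WellFounded.has_min wellFounded_lt {ξ | ¬Γ.Wins ξ p}
      (not_forall.1 hwins)
    by_cases hgood : Γ.Good p
    · obtain ⟨η, hη, c, hc⟩ : ∃ η < ζ, ∃ c, ∀ p', Γ.Reply p c p' → ¬Γ.Wins η p' := by
        by_contra! hcon
        exact hζ (wins_iff.2 ⟨hgood, hcon⟩)
      refine ⟨c, fun ξ _ hξ => by_contra fun hlost => ?_⟩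
      obtain ⟨p', hp', hwin⟩ := hξ η (hη.trans_le (not_lt.1 (hmin ξ hlost)))
      exact hc p' hp' hwin
    · exact ⟨Classical.arbitrary C, fun ξ h => absurd h hgood⟩

end ClockedGame

/-- The game in which the second player keeps properly extending a finite sequence inside the
tree `T`; the clocks from which it is won measure the rank of `T`, see `lt_treeRank_iff`. -/
def extensionGame {V : Type*} (T : Set (List V)) : ClockedGame (List V) Unit where
  Good l := l ∈ T
  Reply l _ t := l <+: t ∧ l ≠ t

section ExtensionGame

variable {V : Type u} {T : Set (List V)}

theorem extensionGame_wins_iff {ξ : Ordinal.{u}} (l : T) :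
    (extensionGame T).Wins ξ l ↔
      ∀ h : Acc (fun t s : T => s.val <+: t.val ∧ s.val ≠ t.val) l, ξ ≤ h.rank := by
  constructor
  · intro hwin h
    induction h generalizing ξ with
    | intro l hl ih =>
      by_contra! hlt
      obtain ⟨t, hlt', ht⟩ := hwin.exists_reply hlt ()
      have hrel : l.val <+: t ∧ l.val ≠ t := hlt'
      exact (ih ⟨t, ht.good⟩ hrel ht).not_gt (Acc.rank_lt_of_rel (Acc.intro l hl) hrel)
  · intro h
    refine ClockedGame.wins_of_invariant (Γ := extensionGame T)
      (fun ξ l => ∃ hl : l ∈ T, ∀ h : Acc (fun t s : T => s.val <+: t.val ∧ s.val ≠ t.val)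
        ⟨l, hl⟩, ξ ≤ h.rank) (fun ξ l hl => hl.1) ?_ ⟨l.2, h⟩
    rintro ξ l ⟨hlT, hl⟩ η hη -
    by_contra! hno
    have hchild : ∀ t : T, l <+: t.val ∧ l ≠ t.val →
        ∃ h : Acc (fun t s : T => s.val <+: t.val ∧ s.val ≠ t.val) t, h.rank < η := fun t ht =>
      hno t.val ht t.2
    have hacc : Acc (fun t s : T => s.val <+: t.val ∧ s.val ≠ t.val) ⟨l, hlT⟩ :=
      Acc.intro _ fun t ht => (hchild t ht).1
    refine (hl hacc).not_gt (lt_of_le_of_lt ?_ hη)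
    rw [Acc.rank_eq]
    refine Ordinal.iSup_le fun ⟨t, ht⟩ => Order.succ_le_of_lt ?_
    exact (hchild t ht).2

theorem ClockedGame.Wins.exists_prefix_length_add_le {V : Type*} {T : Set (List V)}
    {ξ : Ordinal.{u}} {d : ℕ} {l : List V} (h : (extensionGame T).Wins (ξ + d) l) :
    ∃ t, l <+: t ∧ l.length + d ≤ t.length ∧ (extensionGame T).Wins ξ t := by
  induction d generalizing l with
  | zero => exact ⟨l, List.prefix_rfl, le_rfl, by simpa using h⟩
  | succ d ih =>
    obtain ⟨t, ⟨hlt, hne⟩, ht⟩ := h.exists_reply (η := ξ + d) (by gcongr; simp) ()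
    obtain ⟨t', htt', hlen, ht'⟩ := ih ht
    have : l.length < t.length := hlt.length_le.lt_of_ne fun heq => hne (hlt.eq_of_length heq)
    exact ⟨t', hlt.trans htt', by omega, ht'⟩

theorem lt_treeRank_iff {V : Type} {T : Set (List V)} (hT : [] ∈ T) {ξ : Ordinal} :
    (ξ : WithTop Ordinal) < treeRank T ↔ (extensionGame T).Wins ξ [] := by
  have hroot : ∀ s : T, s.val ≠ [] → [] <+: s.val ∧ [] ≠ s.val :=
    fun s hs => ⟨List.nil_prefix, hs.symm⟩
  rw [extensionGame_wins_iff ⟨[], hT⟩, treeRank]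
  split_ifs with hwf
  · rw [WithTop.coe_lt_coe, Ordinal.lt_iSup_iff]
    constructor
    · rintro ⟨s, hs⟩ h
      refine (Order.lt_succ_iff.1 hs).trans ?_
      by_cases hnil : s.val = []
      · obtain rfl : s = ⟨[], hT⟩ := Subtype.ext hnil
        rfl
      · exact (Acc.rank_lt_of_rel h (hroot s hnil)).le
    · exact fun h => ⟨⟨[], hT⟩, Order.lt_succ_iff.2 (h _)⟩
  · refine ⟨fun _ h => absurd ⟨fun s => ?_⟩ hwf, fun _ => WithTop.coe_lt_top ξ⟩
    by_cases hnil : s.val = []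
    · obtain rfl : s = ⟨[], hT⟩ := Subtype.ext hnil
      exact h
    · exact h.inv (hroot s hnil)

end ExtensionGame

theorem lt_embIndex_iff {𝒲 : Type} [NormedAddCommGroup 𝒲] [NormedSpace ℝ 𝒲]
    {x : ℕ → 𝒲} {Y : Set 𝒲} {ξ : Ordinal} :
    (ξ : WithTop Ordinal) < embIndex x Y ↔
      ∃ K : ℝ, 1 ≤ K ∧ (extensionGame (embTree x Y K)).Wins ξ [] := by
  have hnil : ∀ K, [] ∈ embTree x Y K := fun K => ⟨by simp, fun a => by simp⟩
  simp only [← lt_treeRank_iff (hnil _)]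
  rw [embIndex]
  split_ifs with htop
  · obtain ⟨K, hK, hKtop⟩ := htop
    exact ⟨fun _ => ⟨K, hK, hKtop ▸ WithTop.coe_lt_top ξ⟩, fun _ => WithTop.coe_lt_top ξ⟩
  · have hbdd : BddAbove {o : Ordinal | ∃ K : ℝ, 1 ≤ K ∧
        (o : WithTop Ordinal) = treeRank (embTree x Y K)} := by
      refine (Ordinal.bddAbove_of_small
        (s := Set.range fun K : ℝ => (treeRank (embTree x Y K)).untopD 0)).mono ?_
      rintro o ⟨K, -, ho⟩
      exact ⟨K, by simp [← ho]⟩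
    rw [WithTop.coe_lt_coe, lt_csSup_iff' hbdd]
    push Not at htop
    constructor
    · rintro ⟨o, ⟨K, hK, ho⟩, hlt⟩
      exact ⟨K, hK, ho ▸ WithTop.coe_lt_coe.2 hlt⟩
    · rintro ⟨K, hK, hlt⟩
      obtain ⟨o, ho⟩ := WithTop.ne_top_iff_exists.1 (htop K hK)
      exact ⟨o, ⟨K, hK, ho⟩, WithTop.coe_lt_coe.1 (ho ▸ hlt)⟩

/-! ### Subspaces of finitely supported sequences -/

section Tails

variable (R : Type*) [Ring R]

/-- The vectors supported in `{0, …, n - 1}`. -/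
abbrev head (n : ℕ) : Submodule R (ℕ →₀ R) := Finsupp.supported R R (Set.Iio n)

/-- The vectors supported in `{n, n + 1, …}`. -/
abbrev tail (n : ℕ) : Submodule R (ℕ →₀ R) := Finsupp.supported R R (Set.Ici n)

variable {R}

theorem head_mono : Monotone (head R) := fun _ _ h =>
  Finsupp.supported_mono (Set.Iio_subset_Iio h)

theorem tail_anti : Antitone (tail R) := fun _ _ h =>
  Finsupp.supported_mono (Set.Ici_subset_Ici.2 h)

theorem exists_mem_head (v : ℕ →₀ R) : ∃ n, v ∈ head R n := by
  obtain ⟨n, hn⟩ := v.support.exists_nat_subset_range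
  exact ⟨n, (Finsupp.mem_supported R v).2 fun i hi => Finset.mem_range.1 (hn hi)⟩

theorem disjoint_head_tail (n : ℕ) : Disjoint (head R n) (tail R n) :=
  Finsupp.disjoint_supported_supported (Set.Iio_disjoint_Ici le_rfl)

theorem inf_tail_le_inf_tail {X Z : Submodule R (ℕ →₀ R)} {m : ℕ} (h : X ⊓ tail R m ≤ Z) (n : ℕ) :
    X ⊓ tail R (max m n) ≤ Z ⊓ tail R n :=
  le_inf ((inf_le_inf_left X (tail_anti (le_max_left m n))).trans h)
    (inf_le_right.trans (tail_anti (le_max_right m n)))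

/-- `X` meets every tail nontrivially; over a field this says that `X` is
infinite-dimensional. -/
def MeetsTails (X : Submodule R (ℕ →₀ R)) : Prop := ∀ n, X ⊓ tail R n ≠ ⊥

/-- `X ⊆ Z` up to an initial segment of the coordinates: the quasi-order along which block
subspaces are diagonalised. -/
def AlmostLE (X Z : Submodule R (ℕ →₀ R)) : Prop := ∃ m, X ⊓ tail R m ≤ Z

theorem AlmostLE.of_le {X Z : Submodule R (ℕ →₀ R)} (h : X ≤ Z) : AlmostLE X Z :=
  ⟨0, inf_le_left.trans h⟩

namespace MeetsTails

variable {X Z : Submodule R (ℕ →₀ R)}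

theorem exists_mem_tail (h : MeetsTails X) (n : ℕ) : ∃ v ∈ X, v ∈ tail R n ∧ v ≠ 0 := by
  obtain ⟨v, ⟨hvX, hvn⟩, hv⟩ := (Submodule.ne_bot_iff _).1 (h n)
  exact ⟨v, hvX, hvn, hv⟩

theorem inf_tail (h : MeetsTails X) (m : ℕ) : MeetsTails (X ⊓ tail R m) := fun n =>
  ne_bot_of_le_ne_bot (h (max m n)) (inf_tail_le_inf_tail le_rfl n)

end MeetsTails

theorem meetsTails_top [Nontrivial R] : MeetsTails (⊤ : Submodule R (ℕ →₀ R)) := fun n =>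
  (Submodule.ne_bot_iff _).2 ⟨Finsupp.single n 1,
    ⟨trivial, Finsupp.single_mem_supported R 1 Set.self_mem_Ici⟩, by simp⟩

/-- `x` is a sequence of nonzero vectors with `x k` supported in `[p k, p (k + 1))`. -/
structure IsBlockBetween (p : ℕ → ℕ) (x : ℕ → ℕ →₀ R) : Prop where
  strictMono : StrictMono p
  ne_zero : ∀ k, x k ≠ 0
  mem_tail : ∀ k, x k ∈ tail R (p k)
  mem_head : ∀ k, x k ∈ head R (p (k + 1))

theorem exists_isBlockBetween {Q : ℕ → (ℕ →₀ R) → Prop}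
    (h : ∀ k n, ∃ v ∈ tail R n, v ≠ 0 ∧ Q k v) :
    ∃ p x, IsBlockBetween (R := R) p x ∧ ∀ k, Q k (x k) := by
  choose g hgtail hg0 hgQ using h
  choose b hb using exists_mem_head (R := R)
  let p : ℕ → ℕ := Nat.rec 0 fun k n => max (n + 1) (b (g k n))
  have hp : ∀ k, p (k + 1) = max (p k + 1) (b (g k (p k))) := fun _ => rfl
  refine ⟨p, fun k => g k (p k), ⟨strictMono_nat_of_lt_succ fun k => ?_, fun k => hg0 _ _,
    fun k => hgtail _ _, fun k => ?_⟩, fun k => hgQ _ _⟩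
  · exact (Nat.lt_succ_self _).trans_le (hp k ▸ le_max_left _ _)
  · exact head_mono (hp k ▸ le_max_right _ _) (hb _)

namespace IsBlockBetween

variable {p : ℕ → ℕ} {x : ℕ → ℕ →₀ R}

theorem mem_span_of_mem_tail (h : IsBlockBetween p x) {k : ℕ} {v : ℕ →₀ R}
    (hv : v ∈ Submodule.span R (Set.range x)) (hvk : v ∈ tail R (p k)) :
    v ∈ Submodule.span R (x '' Set.Ici k) := by
  rw [← Set.image_univ, ← Set.Iio_union_Ici (a := k), Set.image_union, Submodule.span_union] at hv
  obtain ⟨a, ha, b, hb, rfl⟩ := Submodule.mem_sup.1 hv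
  have hatail : a ∈ tail R (p k) := by
    refine (Submodule.add_mem_iff_left _ (Submodule.span_le.2 ?_ hb)).1 hvk
    rintro _ ⟨j, hj, rfl⟩
    exact tail_anti (h.strictMono.monotone hj) (h.mem_tail j)
  have hahead : a ∈ head R (p k) := by
    refine Submodule.span_le.2 ?_ ha
    rintro _ ⟨j, hj, rfl⟩
    exact head_mono (h.strictMono.monotone hj) (h.mem_head j)
  rwa [Submodule.disjoint_def.1 (disjoint_head_tail (p k)) a hahead hatail, zero_add]

theorem meetsTails_span (h : IsBlockBetween p x) :
    MeetsTails (Submodule.span R (Set.range x)) := fun n =>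
  (Submodule.ne_bot_iff _).2 ⟨x n, ⟨Submodule.subset_span ⟨n, rfl⟩,
    tail_anti (h.strictMono.id_le n) (h.mem_tail n)⟩, h.ne_zero n⟩

end IsBlockBetween

theorem MeetsTails.exists_isBlockBetween_mem {X : Submodule R (ℕ →₀ R)} (h : MeetsTails X) :
    ∃ p x, IsBlockBetween p x ∧ ∀ k, x k ∈ X :=
  exists_isBlockBetween fun _ n =>
    let ⟨v, hvX, hvn, hv⟩ := h.exists_mem_tail n
    ⟨v, hvn, hv, hvX⟩

theorem MeetsTails.exists_diagonal {X : ℕ → Submodule R (ℕ →₀ R)} (hX : ∀ n, MeetsTails (X n))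
    (hanti : Antitone X) : ∃ Z ≤ X 0, MeetsTails Z ∧ ∀ n, AlmostLE Z (X n) := by
  obtain ⟨p, x, hpx, hx⟩ := exists_isBlockBetween (Q := fun k v => v ∈ X k) fun k n => by
    obtain ⟨v, hvX, hvn, hv⟩ := (hX k).exists_mem_tail n
    exact ⟨v, hvn, hv, hvX⟩
  refine ⟨Submodule.span R (Set.range x), Submodule.span_le.2 ?_, hpx.meetsTails_span,
    fun n => ⟨p n, fun v ⟨hv, hvn⟩ => Submodule.span_le.2 ?_ (hpx.mem_span_of_mem_tail hv hvn)⟩⟩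
  · rintro _ ⟨j, rfl⟩
    exact hanti (Nat.zero_le j) (hx j)
  · rintro _ ⟨j, hj, rfl⟩
    exact hanti hj (hx j)

theorem MeetsTails.exists_stable_of_antitone {ι : Type*} [Countable ι]
    {Q : ι → Submodule R (ℕ →₀ R) → Prop} (hQ : ∀ i X Z, AlmostLE X Z → Q i Z → Q i X)
    {X : Submodule R (ℕ →₀ R)} (hX : MeetsTails X) :
    ∃ Z ≤ X, MeetsTails Z ∧ ∀ i, (∃ Z' ≤ Z, MeetsTails Z' ∧ Q i Z') → Q i Z := by
  have := Encodable.ofCountable ι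
  have decide_one : ∀ (n : ℕ) (X : {X : Submodule R (ℕ →₀ R) // MeetsTails X}),
      ∃ Z : {X : Submodule R (ℕ →₀ R) // MeetsTails X}, Z.1 ≤ X.1 ∧ ∀ i, Encodable.encode i = n →
        (∃ Z' ≤ Z.1, MeetsTails Z' ∧ Q i Z') → Q i Z.1 := by
    rintro n ⟨X, hX⟩
    by_cases h : ∃ Z ≤ X, MeetsTails Z ∧ ∃ i : ι, Encodable.encode i = n ∧ Q i Z
    · obtain ⟨Z, hZX, hZ, i, hi, hQi⟩ := h
      refine ⟨⟨Z, hZ⟩, hZX, fun j hj _ => ?_⟩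
      rwa [Encodable.encode_injective (hj.trans hi.symm)]
    · exact ⟨⟨X, hX⟩, le_rfl, fun i hi ⟨Z, hZX, hZ, hQZ⟩ => absurd ⟨Z, hZX, hZ, i, hi, hQZ⟩ h⟩
  choose next next_le hnext using decide_one
  let S : ℕ → {X : Submodule R (ℕ →₀ R) // MeetsTails X} := Nat.rec ⟨X, hX⟩ fun n Z => next n Z
  have hS : ∀ n, S (n + 1) = next n (S n) := fun _ => rfl
  obtain ⟨Z, hZX, hZ, hdiag⟩ := exists_diagonal (fun n => (S n).2)
    (antitone_nat_of_succ_le fun n => (hS n).symm ▸ next_le n (S n))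
  refine ⟨Z, hZX, hZ, fun i ⟨Z', hZZ', hZ', hQZ'⟩ => ?_⟩
  obtain ⟨m, hm⟩ := hdiag (Encodable.encode i + 1)
  refine hQ i Z _ ⟨m, hm⟩ (hnext _ _ i rfl ⟨Z' ⊓ tail R m, ?_, hZ'.inf_tail m, ?_⟩)
  · exact (inf_le_inf_right _ hZZ').trans hm
  · exact hQ i _ Z' (.of_le inf_le_left) hQZ'

theorem MeetsTails.exists_stable_of_monotone {ι : Type*} [Countable ι]
    {Q : ι → Submodule R (ℕ →₀ R) → Prop} (hQ : ∀ i X Z, AlmostLE X Z → Q i X → Q i Z)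
    {X : Submodule R (ℕ →₀ R)} (hX : MeetsTails X) :
    ∃ Z ≤ X, MeetsTails Z ∧ ∀ i, Q i Z → ∀ Z' ≤ Z, MeetsTails Z' → Q i Z' := by
  obtain ⟨Z, hZX, hZ, h⟩ := exists_stable_of_antitone (Q := fun i Z => ¬Q i Z)
    (fun i X Z hXZ => mt (hQ i X Z hXZ)) hX
  exact ⟨Z, hZX, hZ, fun i hQZ Z' hZ'Z hZ' => by_contra fun hQZ' => h i ⟨Z', hZ'Z, hZ', hQZ'⟩ hQZ⟩

end Tails

/-! ### The tail game and the embedding game -/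

section EmbeddingGames

variable {R : Type*} [Ring R]

/-- Every pair in the relation `G` has `N`-values agreeing up to the factor `K`; when `N` is a
norm, `G` is then the graph of a `K`-isomorphism. -/
def DistortionLE (N : (ℕ →₀ R) → ℝ) (K : ℝ)
    (G : Submodule R ((ℕ →₀ R) × (ℕ →₀ R))) : Prop :=
  ∀ q ∈ G, N q.1 ≤ K * N q.2 ∧ N q.2 ≤ K * N q.1

theorem DistortionLE.of_le {N : (ℕ →₀ R) → ℝ} (hN : ∀ v, 0 ≤ N v) {K K' : ℝ} (hK : K ≤ K')
    {G : Submodule R ((ℕ →₀ R) × (ℕ →₀ R))} (h : DistortionLE N K G) : DistortionLE N K' G :=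
  fun q hq => ⟨(h q hq).1.trans (mul_le_mul_of_nonneg_right hK (hN _)),
    (h q hq).2.trans (mul_le_mul_of_nonneg_right hK (hN _))⟩

variable (R) in
/-- A stage in the construction of an embedding: a finitely generated partial map given by its
`graph`, and a finitely generated `space` of vectors that are available as images. -/
@[ext] structure Position where
  space : Submodule R (ℕ →₀ R)
  graph : Submodule R ((ℕ →₀ R) × (ℕ →₀ R))
  fg_space : space.FG
  fg_graph : graph.FG
  map_snd_le : graph.map (LinearMap.snd R _ _) ≤ space

namespace Position

noncomputable instance : Bot (Position R) := ⟨⟨⊥, ⊥, Submodule.fg_bot, Submodule.fg_bot, by simp⟩⟩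

theorem countable_fg {M : Type*} [AddCommGroup M] [Module R M] [Countable M] :
    Countable {S : Submodule R M // S.FG} :=
  Function.Surjective.countable (f := fun s : Finset M => ⟨Submodule.span R (s : Set M), s, rfl⟩)
    fun ⟨_, s, hs⟩ => ⟨s, Subtype.ext hs⟩

instance [Countable R] : Countable (Position R) := by
  have := countable_fg (R := R) (M := ℕ →₀ R)
  have := countable_fg (R := R) (M := (ℕ →₀ R) × (ℕ →₀ R))
  refine Function.Injective.countable (β := {S : Submodule R (ℕ →₀ R) // S.FG} ×
    {S : Submodule R ((ℕ →₀ R) × (ℕ →₀ R)) // S.FG})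
    (f := fun p => (⟨p.space, p.fg_space⟩, ⟨p.graph, p.fg_graph⟩)) fun p q h => ?_
  simp only [Prod.mk.injEq, Subtype.mk.injEq] at h
  exact Position.ext h.1 h.2

/-- `p'` arises from `p` by extending the graph so that its domain covers `S`, the new images lying
in `p.space` plus vectors of `X` beyond `n`. -/
def Step (X : Submodule R (ℕ →₀ R)) (n : ℕ) (S : Submodule R (ℕ →₀ R)) (p p' : Position R) :
    Prop :=
  p.graph ≤ p'.graph ∧ S ≤ p'.graph.map (LinearMap.fst R _ _) ∧
    ∃ F : Submodule R (ℕ →₀ R), F.FG ∧ F ≤ X ⊓ tail R n ∧ p'.space ≤ p.space ⊔ F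

theorem Step.mono {X X' S : Submodule R (ℕ →₀ R)} {n n' : ℕ} {p p' : Position R}
    (hX : X ⊓ tail R n ≤ X' ⊓ tail R n') (h : p.Step X n S p') : p.Step X' n' S p' :=
  let ⟨hG, hS, F, hF, hFX, hp'⟩ := h
  ⟨hG, hS, F, hF, hFX.trans hX, hp'⟩

end Position

/-- The asymptotic embedding game: each challenge is a finitely generated `S ≤ Y` on which the
second player has to extend the embedding, together with an `n` beyond which all new images
have to be supported. -/
def tailGame (N : (ℕ →₀ R) → ℝ) (K : ℝ) (Y X : Submodule R (ℕ →₀ R)) :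
    ClockedGame (Position R) (ℕ × {S : Submodule R (ℕ →₀ R) // S.FG ∧ S ≤ Y}) where
  Good p := DistortionLE N K p.graph
  Reply p c p' := p.Step X c.1 c.2 p'

/-- The embedding game of `Y` into `W`: on each challenge `S ≤ Y` the second player has to
extend the embedding to `S`, with images in `W`. -/
def embeddingGame (N : (ℕ →₀ R) → ℝ) (K : ℝ) (Y W : Submodule R (ℕ →₀ R)) :
    ClockedGame (Submodule R ((ℕ →₀ R) × (ℕ →₀ R)))
      {S : Submodule R (ℕ →₀ R) // S.FG ∧ S ≤ Y} where
  Good G := DistortionLE N K G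
  Reply G S G' := G ≤ G' ∧ S ≤ G'.map (LinearMap.fst R _ _) ∧ G'.map (LinearMap.snd R _ _) ≤ W

theorem tailGame_wins_mono {N : (ℕ →₀ R) → ℝ} (hN : ∀ v, 0 ≤ N v) {K K' : ℝ} (hK : K ≤ K')
    {Y Y' X X' : Submodule R (ℕ →₀ R)} (hY : Y' ≤ Y) (hX : AlmostLE X X')
    {p q : Position R} (hspace : p.space ≤ q.space) (hgraph : p.graph = q.graph)
    {ξ : Ordinal} (h : (tailGame N K Y X).Wins ξ p) : (tailGame N K' Y' X').Wins ξ q := by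
  obtain ⟨m, hm⟩ := hX
  refine h.simulate (fun p q => p.space ≤ q.space ∧ p.graph = q.graph) ?_ ?_ ⟨hspace, hgraph⟩
  · rintro p q ⟨-, hpq⟩ hp
    exact (hpq ▸ hp : DistortionLE N K q.graph).of_le hN hK
  · rintro p q ⟨hpq, hgraph⟩ ⟨n, S, hS, hSY⟩
    refine ⟨⟨max m n, S, hS, hSY.trans hY⟩, fun p' hp' => ⟨p', ?_, le_rfl, rfl⟩⟩
    obtain ⟨hG, hSG, F, hF, hFX, hp'⟩ := Position.Step.mono (inf_tail_le_inf_tail hm n) hp'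
    exact ⟨hgraph ▸ hG, hSG, F, hF, hFX, hp'.trans (sup_le_sup_right hpq F)⟩

/-- The composition of `G` and `G'` as relations. -/
def relComp (G G' : Submodule R ((ℕ →₀ R) × (ℕ →₀ R))) :
    Submodule R ((ℕ →₀ R) × (ℕ →₀ R)) where
  carrier := {q | ∃ b, (q.1, b) ∈ G ∧ (b, q.2) ∈ G'}
  add_mem' := by
    rintro q q' ⟨b, hb, hb'⟩ ⟨c, hc, hc'⟩
    exact ⟨b + c, G.add_mem hb hc, G'.add_mem hb' hc'⟩
  zero_mem' := ⟨0, G.zero_mem, G'.zero_mem⟩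
  smul_mem' := by
    rintro r q ⟨b, hb, hb'⟩
    exact ⟨r • b, G.smul_mem r hb, G'.smul_mem r hb'⟩

theorem relComp_mono {G₁ G₂ G₁' G₂' : Submodule R ((ℕ →₀ R) × (ℕ →₀ R))} (h : G₁ ≤ G₂)
    (h' : G₁' ≤ G₂') : relComp G₁ G₁' ≤ relComp G₂ G₂' := fun _ ⟨b, hb, hb'⟩ => ⟨b, h hb, h' hb'⟩

theorem relComp_bot : relComp (⊥ : Submodule R ((ℕ →₀ R) × (ℕ →₀ R))) ⊥ = ⊥ := by
  refine eq_bot_iff.2 ?_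
  rintro ⟨a, c⟩ ⟨b, hab, hbc⟩
  simp_all

theorem le_map_fst_relComp {G G' : Submodule R ((ℕ →₀ R) × (ℕ →₀ R))}
    {S : Submodule R (ℕ →₀ R)} (hS : S ≤ G.map (LinearMap.fst R _ _))
    (h : G.map (LinearMap.snd R _ _) ≤ G'.map (LinearMap.fst R _ _)) :
    S ≤ (relComp G G').map (LinearMap.fst R _ _) := by
  intro s hs
  obtain ⟨⟨s, b⟩, hsb, rfl⟩ := hS hs
  obtain ⟨⟨b', c⟩, hbc, rfl⟩ := h ⟨_, hsb, rfl⟩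
  exact ⟨(s, c), ⟨b', hsb, hbc⟩, rfl⟩

theorem map_snd_relComp_le (G G' : Submodule R ((ℕ →₀ R) × (ℕ →₀ R))) :
    (relComp G G').map (LinearMap.snd R _ _) ≤ G'.map (LinearMap.snd R _ _) := by
  rintro _ ⟨⟨a, c⟩, ⟨b, -, hbc⟩, rfl⟩
  exact ⟨(b, c), hbc, rfl⟩

theorem DistortionLE.relComp {N : (ℕ →₀ R) → ℝ} {K K' : ℝ} (hK : 0 ≤ K) (hK' : 0 ≤ K')
    {G G' : Submodule R ((ℕ →₀ R) × (ℕ →₀ R))} (h : DistortionLE N K G)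
    (h' : DistortionLE N K' G') : DistortionLE N (K * K') (relComp G G') := by
  rintro ⟨a, c⟩ ⟨b, hab, hbc⟩
  constructor
  · calc N a ≤ K * N b := (h _ hab).1
      _ ≤ K * (K' * N c) := mul_le_mul_of_nonneg_left (h' _ hbc).1 hK
      _ = K * K' * N c := by ring
  · calc N c ≤ K' * N b := (h' _ hbc).2
      _ ≤ K' * (K * N a) := mul_le_mul_of_nonneg_left (h _ hab).2 hK'
      _ = K * K' * N a := by ring

/-- `T` is a family of positions, indexed by clocks, from which the second player can answer
inside every `W ≤ X` all challenges in some tail of `X`, as long as the clock runs. -/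
def IsAnswerable (X : Submodule R (ℕ →₀ R)) (T : Ordinal → Position R → Prop) : Prop :=
  ∀ ξ p, T ξ p → ∀ η < ξ, ∃ m, ∀ S : Submodule R (ℕ →₀ R), S.FG → S ≤ X ⊓ tail R m →
    ∀ W ≤ X, MeetsTails W → ∃ p' : Position R, p.Step W 0 S p' ∧ T η p'

-- The first player's clock drives two runs at once: the images played in the run of the tail game
-- are challenges in the run of the family `T`, which is why they must lie far out.
theorem embeddingGame_wins_of_tailGame_wins {N : (ℕ →₀ R) → ℝ} {K : ℝ} (hK : 0 ≤ K)
    {X Y W : Submodule R (ℕ →₀ R)} (hWX : W ≤ X) (hW : MeetsTails W)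
    {T : Ordinal → Position R → Prop} (hT : IsAnswerable X T)
    (hTgood : ∀ ξ p, T ξ p → DistortionLE N K p.graph) {ξ : Ordinal}
    (hwin : (tailGame N K Y X).Wins ξ ⊥) (hTξ : T ξ ⊥) :
    (embeddingGame N (K * K) Y W).Wins ξ ⊥ := by
  refine ClockedGame.wins_of_invariant (fun ξ G => ∃ p q : Position R, G = relComp p.graph q.graph ∧
    (tailGame N K Y X).Wins ξ p ∧ T ξ q ∧ p.space ≤ q.graph.map (LinearMap.fst R _ _) ∧
      q.space ≤ W) ?_ ?_ ⟨⊥, ⊥, relComp_bot.symm, hwin, hTξ, bot_le, bot_le⟩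
  · rintro ξ _ ⟨p, q, rfl, hp, hq, -, -⟩
    exact hp.good.relComp hK hK (hTgood ξ q hq)
  · rintro ξ _ ⟨p, q, rfl, hp, hq, hpq, hqW⟩ η hη ⟨S, hS, hSY⟩
    obtain ⟨m, hm⟩ := hT ξ q hq η hη
    obtain ⟨p', ⟨hpp', hSp', F, hF, hFX, hp'F⟩, hp'⟩ := hp.exists_reply hη ⟨m, S, hS, hSY⟩
    obtain ⟨q', ⟨hqq', hFq', F', -, hF'W, hq'F'⟩, hq'⟩ := hm F hF hFX W hWX hW
    have hp'q' : p'.space ≤ q'.graph.map (LinearMap.fst R _ _) :=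
      hp'F.trans (sup_le (hpq.trans (Submodule.map_mono hqq')) hFq')
    have hq'W : q'.space ≤ W := hq'F'.trans (sup_le hqW (hF'W.trans inf_le_left))
    exact ⟨_, ⟨relComp_mono hpp' hqq', le_map_fst_relComp hSp' (p'.map_snd_le.trans hp'q'),
      (map_snd_relComp_le _ _).trans (q'.map_snd_le.trans hq'W)⟩, p', q', rfl, hp', hq', hp'q',
      hq'W⟩

/-- Some subspace of `Z` that meets every tail can be embedded into `Z` in the tail game, starting
at `p`. -/
def HasTailWin (N : (ℕ →₀ R) → ℝ) (K : ℝ) (ξ : Ordinal) (p : Position R)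
    (Z : Submodule R (ℕ →₀ R)) : Prop :=
  ∃ Y ≤ Z, MeetsTails Y ∧ (tailGame N K Y Z).Wins ξ p

theorem HasTailWin.good {N : (ℕ →₀ R) → ℝ} {K : ℝ} {ξ : Ordinal} {p : Position R}
    {Z : Submodule R (ℕ →₀ R)} (h : HasTailWin N K ξ p Z) : DistortionLE N K p.graph :=
  let ⟨_, _, _, hwin⟩ := h
  hwin.good

theorem HasTailWin.mono {N : (ℕ →₀ R) → ℝ} (hN : ∀ v, 0 ≤ N v) {K : ℝ} {ξ : Ordinal}
    {p : Position R} {Z Z' : Submodule R (ℕ →₀ R)} (hZ : AlmostLE Z Z')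
    (h : HasTailWin N K ξ p Z) : HasTailWin N K ξ p Z' := by
  obtain ⟨Y, hYZ, hY, hwin⟩ := h
  obtain ⟨m, hm⟩ := id hZ
  exact ⟨Y ⊓ tail R m, (inf_le_inf_right _ hYZ).trans hm, hY.inf_tail m,
    tailGame_wins_mono hN le_rfl inf_le_left hZ le_rfl rfl hwin⟩

/-- Every demand for a tail of `X` can be met by a reply to `S` that leaves a position in `T`. -/
def CanAnswerFrom (T : Position R → Prop) (p : Position R) (S X : Submodule R (ℕ →₀ R)) : Prop :=
  ∀ n, ∃ p', p.Step X n S p' ∧ T p'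

theorem CanAnswerFrom.mono {T : Position R → Prop} {p : Position R}
    {S X X' : Submodule R (ℕ →₀ R)} (hX : AlmostLE X X') (h : CanAnswerFrom T p S X) :
    CanAnswerFrom T p S X' := fun n =>
  let ⟨m, hm⟩ := hX
  let ⟨p', hp', hTp'⟩ := h (max m n)
  ⟨p', hp'.mono (inf_tail_le_inf_tail hm n), hTp'⟩

theorem HasTailWin.exists_canAnswerFrom {N : (ℕ →₀ R) → ℝ} (hN : ∀ v, 0 ≤ N v) {K : ℝ}
    {ξ η : Ordinal} {p : Position R} {X X₁ : Submodule R (ℕ →₀ R)} (hX : X ≤ X₁)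
    (h : HasTailWin N K ξ p X) (hη : η < ξ) :
    ∃ Y ≤ X, MeetsTails Y ∧ ∀ S : Submodule R (ℕ →₀ R), S.FG → S ≤ Y →
      CanAnswerFrom (fun p => HasTailWin N K η p X₁) p S X := by
  obtain ⟨Y, hYX, hY, hwin⟩ := h
  refine ⟨Y, hYX, hY, fun S hS hSY n => ?_⟩
  obtain ⟨p', hstep, hp'⟩ := hwin.exists_reply hη ⟨n, S, hS, hSY⟩
  exact ⟨p', hstep, .mono hN (.of_le hX) ⟨Y, hYX, hY, hp'⟩⟩

theorem exists_stable_tail {ι : Type*} [Countable ι] (A : ι → Submodule R (ℕ →₀ R) → Prop)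
    {X : Submodule R (ℕ →₀ R)} (hX : MeetsTails X) :
    ∃ X' ≤ X, MeetsTails X' ∧ ∀ i, (∃ Y ≤ X', MeetsTails Y ∧ ∀ S, S.FG → S ≤ Y → A i S) →
      ∃ m, ∀ S, S.FG → S ≤ X' ⊓ tail R m → A i S := by
  obtain ⟨X', hX'X, hX', h⟩ := hX.exists_stable_of_antitone
    (Q := fun i Y => ∃ m, ∀ S, S.FG → S ≤ Y ⊓ tail R m → A i S) fun i Y Z hYZ ⟨n, hn⟩ => by
      obtain ⟨m, hm⟩ := hYZ
      exact ⟨max m n, fun S hS hSY => hn S hS (hSY.trans (inf_tail_le_inf_tail hm n))⟩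
  exact ⟨X', hX'X, hX', fun i ⟨Y, hYX', hY, hA⟩ =>
    h i ⟨Y, hYX', hY, 0, fun S hS hSY => hA S hS (hSY.trans inf_le_left)⟩⟩

section Stabilisation

variable [Countable R]

theorem exists_stable_canAnswerFrom {ι : Type*} [Countable ι] (T : ι → Position R → Prop)
    {X : Submodule R (ℕ →₀ R)} (hX : MeetsTails X) :
    ∃ X' ≤ X, MeetsTails X' ∧ ∀ i p (S : Submodule R (ℕ →₀ R)), S.FG →
      CanAnswerFrom (T i) p S X' → ∀ W ≤ X', MeetsTails W → CanAnswerFrom (T i) p S W := by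
  have := Position.countable_fg (R := R) (M := ℕ →₀ R)
  obtain ⟨X', hX'X, hX', h⟩ := hX.exists_stable_of_monotone
    (Q := fun i : ι × Position R × {S : Submodule R (ℕ →₀ R) // S.FG} =>
      CanAnswerFrom (T i.1) i.2.1 i.2.2) fun _ _ _ h => CanAnswerFrom.mono h
  exact ⟨X', hX'X, hX', fun i p S hS => h (i, p, ⟨S, hS⟩)⟩

theorem exists_isAnswerable_hasTailWin {N : (ℕ →₀ R) → ℝ} (hN : ∀ v, 0 ≤ N v) {K : ℝ}
    {α : Ordinal} (hα : Countable (Set.Iic α)) {X₁ : Submodule R (ℕ →₀ R)} (hX₁ : MeetsTails X₁)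
    (hstable : ∀ ξ ≤ α, ∀ p, HasTailWin N K ξ p X₁ →
      ∀ Z ≤ X₁, MeetsTails Z → HasTailWin N K ξ p Z) :
    ∃ X ≤ X₁, MeetsTails X ∧ IsAnswerable X fun ξ p => ξ ≤ α ∧ HasTailWin N K ξ p X₁ := by
  let T : Set.Iic α → Position R → Prop := fun ξ p => HasTailWin N K ξ p X₁
  obtain ⟨X₂, hX₂₁, hX₂, hanswer⟩ := exists_stable_canAnswerFrom T hX₁
  obtain ⟨X₃, hX₃₂, hX₃, htail⟩ := exists_stable_tail
    (fun (i : Set.Iic α × Position R) S => CanAnswerFrom (T i.1) i.2 S X₂) hX₂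
  refine ⟨X₃, hX₃₂.trans hX₂₁, hX₃, fun ξ p ⟨hξ, hp⟩ η hη => ?_⟩
  have hηα : η ≤ α := hη.le.trans hξ
  obtain ⟨Y, hYX₃, hY, hYS⟩ := (hstable ξ hξ p hp X₃ (hX₃₂.trans hX₂₁) hX₃).exists_canAnswerFrom hN
    (hX₃₂.trans hX₂₁) hη
  obtain ⟨m, hm⟩ := htail (⟨η, hηα⟩, p)
    ⟨Y, hYX₃, hY, fun S hS hSY => (hYS S hS hSY).mono (.of_le hX₃₂)⟩
  refine ⟨m, fun S hS hSX W hW hWX => ?_⟩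
  obtain ⟨p', hstep, hp'⟩ := hanswer ⟨η, hηα⟩ p S hS (hm S hS hSX) W (hW.trans hX₃₂) hWX 0
  exact ⟨p', hstep, hηα, hp'⟩

theorem exists_embeddingGame_wins [Nontrivial R] {N : (ℕ →₀ R) → ℝ} (hN : ∀ v, 0 ≤ N v)
    {α : Ordinal} (hα : Countable (Set.Iic α))
    (H : ∀ X, MeetsTails X → ∃ K : ℕ, HasTailWin N K α ⊥ X) :
    ∃ (Y : Submodule R (ℕ →₀ R)) (K : ℕ), MeetsTails Y ∧
      ∀ W ≤ Y, MeetsTails W → (embeddingGame N K Y W).Wins α ⊥ := by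
  obtain ⟨X₁, -, hX₁, hstable⟩ := meetsTails_top.exists_stable_of_monotone
    (Q := fun i : ℕ × Set.Iic α × Position R => HasTailWin N i.1 i.2.1 i.2.2)
    fun _ _ _ h => HasTailWin.mono hN h
  obtain ⟨K, hK⟩ := H X₁ hX₁
  obtain ⟨X, hXX₁, hX, hanswer⟩ := exists_isAnswerable_hasTailWin (K := K) hN hα hX₁
    fun ξ hξ p => hstable (K, ⟨ξ, hξ⟩, p)
  obtain ⟨Y, hYX, hY, hwin⟩ := hstable (K, ⟨α, Set.mem_Iic.2 le_rfl⟩, ⊥) hK X hXX₁ hX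
  refine ⟨Y, K * K, hY, fun W hWY hW => ?_⟩
  rw [Nat.cast_mul]
  exact embeddingGame_wins_of_tailGame_wins K.cast_nonneg (hWY.trans hYX) hW hanswer
    (fun _ _ h => h.2.good) hwin ⟨le_rfl, hK⟩

end Stabilisation

end EmbeddingGames

/-! ### Schauder bases -/

section SchauderBasis

variable {𝒲 : Type} [NormedAddCommGroup 𝒲] [NormedSpace ℝ 𝒲]

/-- The convergent sequences of partial sums of series `∑ a n • e n`, each extended to `∞` by its
limit; as a closed subspace of `C(OnePoint ℕ, 𝒲)` it is complete. -/
def partialSums (e : ℕ → 𝒲) : Submodule ℝ C(OnePoint ℕ, 𝒲) where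
  carrier := {f | f (0 : ℕ) = 0 ∧ ∀ n : ℕ, f (n + 1 : ℕ) - f n ∈ Submodule.span ℝ {e n}}
  add_mem' := by
    rintro f g ⟨hf₀, hf⟩ ⟨hg₀, hg⟩
    refine ⟨by simp [hf₀, hg₀], fun n => ?_⟩
    simpa only [ContinuousMap.add_apply, add_sub_add_comm] using add_mem (hf n) (hg n)
  zero_mem' := by simp
  smul_mem' := by
    rintro c f ⟨hf₀, hf⟩
    refine ⟨by simp [hf₀], fun n => ?_⟩
    simpa only [ContinuousMap.smul_apply, smul_sub] using Submodule.smul_mem _ c (hf n)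

theorem isClosed_partialSums (e : ℕ → 𝒲) : IsClosed (partialSums e : Set C(OnePoint ℕ, 𝒲)) := by
  have heval (n : ℕ) : Continuous fun f : C(OnePoint ℕ, 𝒲) => f n := continuous_eval_const _
  have hclosed (n : ℕ) : IsClosed (Submodule.span ℝ {e n} : Set 𝒲) :=
    Submodule.closed_of_finiteDimensional _
  simp only [partialSums, Submodule.coe_set_mk, AddSubmonoid.coe_set_mk, AddSubsemigroup.coe_set_mk,
    Set.ofPred_and, Set.ofPred_forall]
  exact (isClosed_eq (heval 0) continuous_const).inter
    (isClosed_iInter fun n => (hclosed n).preimage ((heval (n + 1)).sub (heval n)))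

theorem exists_sum_eq_of_mem_partialSums {e : ℕ → 𝒲} {f : C(OnePoint ℕ, 𝒲)}
    (hf : f ∈ partialSums e) : ∃ a : ℕ → ℝ, ∀ n : ℕ, f n = ∑ i ∈ Finset.range n, a i • e i := by
  choose a ha using fun n => Submodule.mem_span_singleton.1 (hf.2 n)
  refine ⟨a, fun n => ?_⟩
  rw [Finset.sum_congr rfl fun i _ => ha i, Finset.sum_range_sub (fun n : ℕ => f n), hf.1, sub_zero]

theorem exists_mem_partialSums {e : ℕ → 𝒲} {a : ℕ → ℝ} {x : 𝒲}
    (h : Tendsto (fun N => ∑ i ∈ Finset.range N, a i • e i) atTop (𝓝 x)) :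
    ∃ f ∈ partialSums e, f OnePoint.infty = x := by
  refine ⟨OnePoint.continuousMapMkNat _ x h,
    ⟨Finset.sum_range_zero (fun i => a i • e i), fun n => ?_⟩,
    rfl⟩
  change ∑ i ∈ Finset.range (n + 1), a i • e i - ∑ i ∈ Finset.range n, a i • e i ∈ _
  rw [Finset.sum_range_succ_sub_sum]
  exact Submodule.smul_mem _ _ (Submodule.mem_span_singleton_self _)

variable {e : ℕ → 𝒲}

theorem IsSchauderBasis.ne_zero (he : IsSchauderBasis e) (i : ℕ) : e i ≠ 0 := by
  intro hi
  have h (c : ℝ) : Tendsto (fun N => ∑ j ∈ Finset.range N, (Pi.single i c : ℕ → ℝ) j • e j) atTop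
      (𝓝 0) := by
    refine tendsto_const_nhds.congr fun N => (Finset.sum_eq_zero fun j _ => ?_).symm
    obtain rfl | hj := eq_or_ne j i <;> simp [*]
  simpa using congrFun ((he 0).unique (h 0) (h 1)) i

/-- The coordinates with respect to a Schauder basis. -/
noncomputable def IsSchauderBasis.coord (he : IsSchauderBasis e) (x : 𝒲) : ℕ → ℝ :=
  (he x).choose

theorem IsSchauderBasis.tendsto_coord (he : IsSchauderBasis e) (x : 𝒲) :
    Tendsto (fun N => ∑ i ∈ Finset.range N, he.coord x i • e i) atTop (𝓝 x) :=
  (he x).choose_spec.1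

theorem IsSchauderBasis.coord_eq (he : IsSchauderBasis e) {x : 𝒲} {a : ℕ → ℝ}
    (ha : Tendsto (fun N => ∑ i ∈ Finset.range N, a i • e i) atTop (𝓝 x)) : he.coord x = a :=
  (he x).unique (he.tendsto_coord x) ha

theorem IsSchauderBasis.coord_self (he : IsSchauderBasis e) (j : ℕ) :
    he.coord (e j) = Pi.single j 1 := by
  refine he.coord_eq (tendsto_const_nhds.congr' ?_)
  filter_upwards [eventually_gt_atTop j] with N hN
  simp [Pi.single_apply, hN]

variable [CompleteSpace 𝒲]

-- The open mapping theorem for the evaluation of `partialSums e` at `∞`.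
theorem IsSchauderBasis.exists_norm_sum_le (he : IsSchauderBasis e) :
    ∃ M : ℝ, ∀ x (a : ℕ → ℝ), Tendsto (fun N => ∑ i ∈ Finset.range N, a i • e i) atTop (𝓝 x) →
      ∀ n, ‖∑ i ∈ Finset.range n, a i • e i‖ ≤ M * ‖x‖ := by
  have := (isClosed_partialSums e).completeSpace_coe
  let lim : partialSums e →L[ℝ] 𝒲 :=
    (ContinuousMap.evalCLM ℝ OnePoint.infty).comp (partialSums e).subtypeL
  have hlim : Function.Surjective lim := fun x =>
    let ⟨_, ha, _⟩ := he x
    let ⟨f, hf, hfx⟩ := exists_mem_partialSums ha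
    ⟨⟨f, hf⟩, hfx⟩
  obtain ⟨M, -, hM⟩ := lim.exists_preimage_norm_le hlim
  refine ⟨M, fun x a ha n => ?_⟩
  obtain ⟨⟨f, hf⟩, hfx, hfM⟩ := hM x
  obtain ⟨a', ha'⟩ := exists_sum_eq_of_mem_partialSums hf
  have htends : Tendsto (fun n : ℕ => f n) atTop (𝓝 x) :=
    hfx ▸ (OnePoint.continuous_iff_from_nat f).1 f.continuous
  obtain rfl : a = a' := (he x).unique ha (by simpa only [ha'] using htends)
  exact ha' n ▸ (f.norm_coe_le_norm n).trans hfM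

theorem IsSchauderBasis.exists_schauderBasis (he : IsSchauderBasis e) :
    ∃ b : SchauderBasis ℝ 𝒲, ⇑b = e := by
  obtain ⟨M, hM⟩ := he.exists_norm_sum_le
  let coordLM (n : ℕ) : 𝒲 →ₗ[ℝ] ℝ :=
    { toFun := fun x => he.coord x n
      map_add' := fun x y => congrFun (he.coord_eq (a := he.coord x + he.coord y) <| by
        simpa only [Pi.add_apply, add_smul, Finset.sum_add_distrib] using
          (he.tendsto_coord x).add (he.tendsto_coord y)) n
      map_smul' := fun c x => congrFun (he.coord_eq (a := c • he.coord x) <| by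
        simpa only [Pi.smul_apply, smul_assoc, ← Finset.smul_sum] using
          (he.tendsto_coord x).const_smul c) n }
  have hbound (n : ℕ) (x : 𝒲) : ‖coordLM n x‖ ≤ 2 * M / ‖e n‖ * ‖x‖ := by
    rw [div_mul_eq_mul_div, le_div_iff₀ (norm_pos_iff.2 (he.ne_zero n)), ← norm_smul]
    calc ‖he.coord x n • e n‖
        = ‖∑ i ∈ Finset.range (n + 1), he.coord x i • e i
            - ∑ i ∈ Finset.range n, he.coord x i • e i‖ := by rw [Finset.sum_range_succ_sub_sum]
      _ ≤ M * ‖x‖ + M * ‖x‖ := norm_sub_le_of_le (hM x _ (he.tendsto_coord x) _)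
          (hM x _ (he.tendsto_coord x) _)
      _ = 2 * M * ‖x‖ := by ring
  refine ⟨⟨e, fun n => (coordLM n).mkContinuous _ (hbound n), fun i j => ?_, fun x => ?_⟩, rfl⟩
  · refine (congrFun (he.coord_self j) i).trans ?_
    simp only [Pi.single_apply]
    split_ifs <;> rfl
  · rw [HasSum, SummationFilter.conditional_filter_eq_map_range, tendsto_map'_iff]
    exact he.tendsto_coord x

end SchauderBasis

/-! ### Perturbation of basic sequences -/

section SeqEquiv

variable {𝒲 : Type} [NormedAddCommGroup 𝒲] [NormedSpace ℝ 𝒲] {K K' : ℝ} {k : ℕ} {x y z : ℕ → 𝒲}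

theorem seqEquiv_iff (hK : 0 < K) : SeqEquiv K k x y ↔ ∀ a : ℕ → ℝ,
    ‖∑ i ∈ Finset.range k, a i • x i‖ ≤ K * ‖∑ i ∈ Finset.range k, a i • y i‖ ∧
      ‖∑ i ∈ Finset.range k, a i • y i‖ ≤ K * ‖∑ i ∈ Finset.range k, a i • x i‖ := by
  refine forall_congr' fun a => and_congr_left fun _ => ?_
  rw [one_div, inv_mul_le_iff₀ hK]

theorem SeqEquiv.symm (hK : 0 < K) (h : SeqEquiv K k x y) : SeqEquiv K k y x :=
  (seqEquiv_iff hK).2 fun a => ((seqEquiv_iff hK).1 h a).symm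

theorem SeqEquiv.trans (hK : 0 < K) (hK' : 0 < K') (h : SeqEquiv K k x y)
    (h' : SeqEquiv K' k y z) : SeqEquiv (K * K') k x z := by
  rw [seqEquiv_iff (by positivity)]
  intro a
  obtain ⟨hxy, hyx⟩ := (seqEquiv_iff hK).1 h a
  obtain ⟨hyz, hzy⟩ := (seqEquiv_iff hK').1 h' a
  constructor
  · exact (hxy.trans (mul_le_mul_of_nonneg_left hyz hK.le)).trans_eq (mul_assoc _ _ _).symm
  · exact (hzy.trans (mul_le_mul_of_nonneg_left hyx hK'.le)).trans_eq (by ring)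

theorem SeqEquiv.of_rat (hK : 0 < K)
    (h : ∀ r : ℕ → ℚ, ‖∑ i ∈ Finset.range k, (r i : ℝ) • x i‖ ≤
        K * ‖∑ i ∈ Finset.range k, (r i : ℝ) • y i‖ ∧
      ‖∑ i ∈ Finset.range k, (r i : ℝ) • y i‖ ≤ K * ‖∑ i ∈ Finset.range k, (r i : ℝ) • x i‖) :
    SeqEquiv K k x y := by
  rw [seqEquiv_iff hK]
  intro a
  have hdense : DenseRange fun (r : ℕ → ℚ) i => (r i : ℝ) :=
    DenseRange.piMap fun _ => Rat.denseRange_cast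
  refine hdense.induction_on a ?_ h
  rw [Set.ofPred_and]
  exact (isClosed_le (by fun_prop) (by fun_prop)).inter (isClosed_le (by fun_prop) (by fun_prop))

theorem seqEquiv_two_of_norm_sum_sub_le (h : ∀ a : ℕ → ℝ,
    ‖∑ i ∈ Finset.range k, a i • (x i - y i)‖ ≤ 1 / 2 * ‖∑ i ∈ Finset.range k, a i • x i‖) :
    SeqEquiv 2 k x y := by
  rw [seqEquiv_iff two_pos]
  intro a
  have ha := h a
  simp only [smul_sub, Finset.sum_sub_distrib] at ha
  set u := ∑ i ∈ Finset.range k, a i • x i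
  set v := ∑ i ∈ Finset.range k, a i • y i
  have huv := norm_sub_norm_le u v
  have hvu := norm_sub_rev u v ▸ norm_sub_norm_le v u
  constructor <;> linarith [norm_nonneg u]

theorem SeqEquiv.congr_right (h : SeqEquiv K k x y) (hyz : ∀ i < k, y i = z i) :
    SeqEquiv K k x z := fun a => by
  have : ∑ i ∈ Finset.range k, a i • y i = ∑ i ∈ Finset.range k, a i • z i :=
    Finset.sum_congr rfl fun i hi => by rw [hyz i (Finset.mem_range.1 hi)]
  exact this ▸ h a

theorem SeqEquiv.ne_zero (hK : 0 < K) (h : SeqEquiv K k x y) {i : ℕ} (hi : i < k)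
    (hx : x i ≠ 0) : y i ≠ 0 := by
  have hsum (w : ℕ → 𝒲) : ∑ j ∈ Finset.range k, (Pi.single i 1 : ℕ → ℝ) j • w j = w i := by
    simp [Pi.single_apply, ite_smul, hi]
  have hxy := ((seqEquiv_iff hK).1 h (Pi.single i 1)).1
  rw [hsum, hsum] at hxy
  rintro hy
  exact hx (norm_le_zero_iff.1 (by simpa [hy] using hxy))

theorem SeqEquiv.linearCombination (hK : 0 < K) (h : ∀ k, SeqEquiv K k x y)
    (k : ℕ) (c : ℕ → ℕ →₀ ℝ) :
    SeqEquiv K k (fun i => Finsupp.linearCombination ℝ x (c i))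
      (fun i => Finsupp.linearCombination ℝ y (c i)) := by
  refine (seqEquiv_iff hK).2 fun a => ?_
  obtain ⟨n, hn⟩ := exists_mem_head (∑ i ∈ Finset.range k, a i • c i)
  have hsum (w : ℕ → 𝒲) : ∑ i ∈ Finset.range k, a i • Finsupp.linearCombination ℝ w (c i) =
      ∑ j ∈ Finset.range n, (∑ i ∈ Finset.range k, a i • c i) j • w j := by
    simp only [← map_smul, ← map_sum]
    refine Finsupp.linearCombination_apply ℝ _ |>.trans (Finsupp.sum_of_support_subset _ ?_ _ ?_)
    · exact fun j hj => Finset.mem_range.2 (hn hj)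
    · simp
  rw [hsum, hsum]
  exact (seqEquiv_iff hK).1 (h n) _

end SeqEquiv

section CoeffBound

variable {E : Type*} [NormedAddCommGroup E] [NormedSpace ℝ E]

/-- The terms of a linear combination of the `y i` are bounded by `D` times its norm; basic
sequences have this property, and it makes them stable under small perturbations. -/
def CoeffBound (D : ℝ) (y : ℕ → E) : Prop :=
  ∀ (k : ℕ) (a : ℕ → ℝ), ∀ i < k, |a i| * ‖y i‖ ≤ D * ‖∑ j ∈ Finset.range k, a j • y j‖

theorem sum_half_pow_le_one (k : ℕ) : ∑ i ∈ Finset.range k, ((1 : ℝ) / 2) ^ (i + 1) ≤ 1 := by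
  simp only [pow_succ, ← Finset.sum_mul]
  linarith [sum_geometric_two_le k]

theorem CoeffBound.norm_sum_le {D t : ℝ} {y d : ℕ → E} {k : ℕ} (h : CoeffBound D y) (hD : 0 < D)
    (ht : 0 ≤ t) (hd : ∀ i < k, ‖d i‖ ≤ t / D * (1 / 2) ^ (i + 1) * ‖y i‖) (a : ℕ → ℝ) :
    ‖∑ i ∈ Finset.range k, a i • d i‖ ≤ t * ‖∑ i ∈ Finset.range k, a i • y i‖ := by
  set s := ‖∑ i ∈ Finset.range k, a i • y i‖
  have hterm (i : ℕ) (hi : i ∈ Finset.range k) :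
      ‖a i • d i‖ ≤ (1 / 2 : ℝ) ^ (i + 1) * (t * s) := by
    have hik := Finset.mem_range.1 hi
    calc ‖a i • d i‖ = |a i| * ‖d i‖ := by rw [norm_smul, Real.norm_eq_abs]
      _ ≤ |a i| * (t / D * (1 / 2) ^ (i + 1) * ‖y i‖) :=
        mul_le_mul_of_nonneg_left (hd i hik) (abs_nonneg _)
      _ = t / D * (1 / 2) ^ (i + 1) * (|a i| * ‖y i‖) := by ring
      _ ≤ t / D * (1 / 2) ^ (i + 1) * (D * s) :=
        mul_le_mul_of_nonneg_left (h k a i hik) (by positivity)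
      _ = (1 / 2 : ℝ) ^ (i + 1) * (t * s) := by field_simp
  calc ‖∑ i ∈ Finset.range k, a i • d i‖
      ≤ ∑ i ∈ Finset.range k, (1 / 2 : ℝ) ^ (i + 1) * (t * s) := norm_sum_le_of_le _ hterm
    _ = (∑ i ∈ Finset.range k, (1 / 2 : ℝ) ^ (i + 1)) * (t * s) := by rw [Finset.sum_mul]
    _ ≤ t * s := mul_le_of_le_one_left (by positivity) (sum_half_pow_le_one k)

theorem CoeffBound.seqEquiv_two {𝒲 : Type} [NormedAddCommGroup 𝒲] [NormedSpace ℝ 𝒲] {D : ℝ}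
    {y z : ℕ → 𝒲} {k : ℕ} (h : CoeffBound D y) (hD : 0 < D)
    (hyz : ∀ i < k, ‖y i - z i‖ ≤ 1 / 2 / D * (1 / 2) ^ (i + 1) * ‖y i‖) : SeqEquiv 2 k y z :=
  seqEquiv_two_of_norm_sum_sub_le (h.norm_sum_le hD one_half_pos.le hyz)

end CoeffBound

section Blocks

variable {𝒲 : Type} [NormedAddCommGroup 𝒲] [NormedSpace ℝ 𝒲]

theorem SuppIn.mono {c : ℕ → 𝒲} {v : 𝒲} {s t : Finset ℕ} (h : SuppIn c v s) (hst : s ⊆ t) :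
    SuppIn c v t := by
  obtain ⟨a, rfl⟩ := h
  refine ⟨fun i => if i ∈ s then a i else 0, ?_⟩
  simp only [ite_smul, zero_smul, Finset.sum_ite_mem, Finset.inter_eq_right.2 hst]

theorem IsBlockSeq.exists_suppIn_Ico {c y : ℕ → 𝒲} (h : IsBlockSeq c y) :
    ∃ s : ℕ → ℕ, StrictMono s ∧ ∀ k, SuppIn c (y k) (Finset.Ico (s k) (s (k + 1))) := by
  obtain ⟨hy, D, hD, hlt⟩ := h
  have hne (k : ℕ) : (D k).Nonempty := by
    rw [Finset.nonempty_iff_ne_empty]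
    rintro hk
    obtain ⟨a, ha⟩ := hD k
    exact hy k (by rw [ha, hk, Finset.sum_empty])
  have hmin (k : ℕ) : ∀ i ∈ D k, (D k).min' (hne k) ≤ i := fun i hi => Finset.min'_le _ _ hi
  have hmax (k : ℕ) : ∀ i ∈ D k, i < (D (k + 1)).min' (hne (k + 1)) := fun i hi =>
    hlt k i hi _ (Finset.min'_mem _ _)
  exact ⟨fun k => (D k).min' (hne k), strictMono_nat_of_lt_succ fun k =>
    hmax k _ (Finset.min'_mem _ _), fun k => (hD k).mono fun i hi =>
      Finset.mem_Ico.2 ⟨hmin k i hi, hmax k i hi⟩⟩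

end Blocks

section BasisProjections

variable {E : Type*} [NormedAddCommGroup E] [NormedSpace ℝ E] (b : SchauderBasis ℝ E)

theorem basis_ne_zero (i : ℕ) : b i ≠ 0 := b.linearIndependent.ne_zero i

/-- `y` is a sequence of linear combinations of the basis vectors with indices in the successive
intervals `[q k, q (k + 1))`. -/
structure IsSuccessive (q : ℕ → ℕ) (y : ℕ → E) : Prop where
  monotone : Monotone q
  proj_left : ∀ k, b.proj (q k) (y k) = 0
  proj_right : ∀ k, b.proj (q (k + 1)) (y k) = y k

variable {b} {q : ℕ → ℕ} {y : ℕ → E}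

theorem proj_eq_zero_of_le {m n : ℕ} {v : E} (hmn : m ≤ n) (hv : b.proj n v = 0) :
    b.proj m v = 0 := by
  rw [← min_eq_left hmn, ← b.proj_comp, hv, map_zero]

theorem proj_eq_self_of_le {m n : ℕ} {v : E} (hmn : m ≤ n) (hv : b.proj m v = v) :
    b.proj n v = v := by
  rw [← hv, b.proj_comp, min_eq_right hmn]

theorem IsSuccessive.proj_eq_zero (h : IsSuccessive b q y) {m k : ℕ} (hmk : m ≤ q k) :
    b.proj m (y k) = 0 := proj_eq_zero_of_le hmk (h.proj_left k)

theorem IsSuccessive.proj_eq_self (h : IsSuccessive b q y) {m k : ℕ} (hkm : q (k + 1) ≤ m) :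
    b.proj m (y k) = y k := proj_eq_self_of_le hkm (h.proj_right k)

theorem IsSuccessive.coeffBound (h : IsSuccessive b q y) {C : ℝ} (hC : ∀ n, ‖b.proj n‖ ≤ C) :
    CoeffBound (2 * C) y := by
  intro k a i hi
  set s := ∑ j ∈ Finset.range k, a j • y j with hs
  have hproj : b.proj (q (i + 1)) s - b.proj (q i) s = a i • y i := by
    simp only [hs, map_sum, map_smul, ← Finset.sum_sub_distrib, ← smul_sub]
    rw [Finset.sum_eq_single_of_mem i (Finset.mem_range.2 hi)]
    · rw [h.proj_left, h.proj_right, sub_zero]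
    · intro j _ hji
      rcases hji.lt_or_gt with hji | hij
      · rw [h.proj_eq_self (h.monotone (by omega)), h.proj_eq_self (h.monotone hji), sub_self,
          smul_zero]
      · rw [h.proj_eq_zero (h.monotone hij), h.proj_eq_zero (h.monotone hij.le), sub_self,
          smul_zero]
  calc |a i| * ‖y i‖ = ‖b.proj (q (i + 1)) s - b.proj (q i) s‖ := by
        rw [hproj, norm_smul, Real.norm_eq_abs]
    _ ≤ C * ‖s‖ + C * ‖s‖ := norm_sub_le_of_le ((b.proj _).le_of_opNorm_le (hC _) s)
        ((b.proj _).le_of_opNorm_le (hC _) s)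
    _ = 2 * C * ‖s‖ := by ring

theorem IsSuccessive.of_isBlockSeq {𝒲 : Type} [NormedAddCommGroup 𝒲] [NormedSpace ℝ 𝒲]
    {b : SchauderBasis ℝ 𝒲} {q : ℕ → ℕ} {x y : ℕ → 𝒲} (h : IsSuccessive b q x)
    (hy : IsBlockSeq x y) : ∃ q', IsSuccessive b q' y := by
  obtain ⟨s, hs, hys⟩ := hy.exists_suppIn_Ico
  refine ⟨fun k => q (s k), h.monotone.comp hs.monotone, fun k => ?_, fun k => ?_⟩ <;>
    obtain ⟨a, ha⟩ := hys k <;> rw [ha, map_sum]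
  · refine Finset.sum_eq_zero fun i hi => ?_
    rw [map_smul, h.proj_eq_zero (h.monotone (Finset.mem_Ico.1 hi).1), smul_zero]
  · refine Finset.sum_congr rfl fun i hi => ?_
    rw [map_smul, h.proj_eq_self (h.monotone (Finset.mem_Ico.1 hi).2)]

theorem one_le_of_norm_proj_le {C : ℝ} (hC : ∀ n, ‖b.proj n‖ ≤ C) : 1 ≤ C := by
  have h := (b.proj 1).le_of_opNorm_le (hC 1) (b 0)
  rw [b.proj_apply_basis_mem, if_pos one_pos] at h
  exact (le_mul_iff_one_le_left (norm_pos_iff.2 (basis_ne_zero b 0))).1 h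

end BasisProjections

section RationalCombinations

variable {E : Type*} [NormedAddCommGroup E] [NormedSpace ℝ E] [Module ℚ E]

theorem span_real_le_closure_span_rat (S : Set E) :
    (Submodule.span ℝ S : Set E) ⊆ closure (Submodule.span ℚ S) := by
  intro w hw
  refine Submodule.span_induction (fun v hv => subset_closure (Submodule.subset_span hv))
    (subset_closure (zero_mem _)) (fun v w _ _ hv hw => ?_) (fun r v _ hv => ?_) hw
  · exact map_mem_closure₂ continuous_add hv hw fun _ ha _ hb => add_mem ha hb
  · refine Rat.denseRange_cast.induction_on r (isClosed_closure.preimage (by fun_prop)) fun q => ?_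
    exact map_mem_closure (continuous_const_smul (q : ℝ)) hv fun u hu =>
      (Rat.cast_smul_eq_qsmul ℝ q u).symm ▸ Submodule.smul_mem _ q hu

/-- The rational linear combinations of the basis `b`, which identify the games played on
`ℕ →₀ ℚ` with games on a countable dense part of `E`. -/
noncomputable abbrev ratComb (b : SchauderBasis ℝ E) : (ℕ →₀ ℚ) →ₗ[ℚ] E :=
  Finsupp.linearCombination ℚ b

variable {b : SchauderBasis ℝ E}

theorem exists_mem_span_norm_sub_ratComb_lt {S : Set (ℕ →₀ ℚ)} {w : E}
    (hw : w ∈ closure (Submodule.span ℝ (ratComb b '' S) : Set E)) {ε : ℝ} (hε : 0 < ε) :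
    ∃ v ∈ Submodule.span ℚ S, ‖w - ratComb b v‖ < ε := by
  have hw' := closure_minimal (span_real_le_closure_span_rat _) isClosed_closure hw
  rw [Submodule.span_image] at hw'
  obtain ⟨_, ⟨v, hv, rfl⟩, hwv⟩ := Metric.mem_closure_iff.1 hw' ε hε
  exact ⟨v, hv, dist_eq_norm w _ ▸ hwv⟩

theorem apply_ratComb {F G : Type*} [AddCommGroup F] [Module ℚ F] [FunLike G E F]
    [AddMonoidHomClass G E F] (f : G) (v : ℕ →₀ ℚ) :
    f (ratComb b v) = ∑ i ∈ v.support, v i • f (b i) := by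
  simp only [Finsupp.linearCombination_apply, Finsupp.sum, map_sum, map_rat_smul]

theorem proj_ratComb_of_mem_tail {n : ℕ} {v : ℕ →₀ ℚ} (hv : v ∈ tail ℚ n) :
    b.proj n (ratComb b v) = 0 := by
  refine (apply_ratComb _ v).trans (Finset.sum_eq_zero fun i hi => ?_)
  rw [b.proj_apply_basis_mem, if_neg (not_lt.2 ((Finsupp.mem_supported ℚ v).1 hv hi)), smul_zero]

theorem proj_ratComb_of_mem_head {n : ℕ} {v : ℕ →₀ ℚ} (hv : v ∈ head ℚ n) :
    b.proj n (ratComb b v) = ratComb b v := by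
  rw [apply_ratComb, Finsupp.linearCombination_apply]
  refine Finset.sum_congr rfl fun i hi => ?_
  rw [b.proj_apply_basis_mem, if_pos (Set.mem_Iio.1 ((Finsupp.mem_supported ℚ v).1 hv hi))]

theorem ratComb_injective : Function.Injective (ratComb b) :=
  linearIndependent_iff_injective_finsuppLinearCombination.1
    (b.linearIndependent.restrict_scalars' ℚ)

theorem ratComb_ne_zero {v : ℕ →₀ ℚ} (hv : v ≠ 0) : ratComb b v ≠ 0 :=
  (map_ne_zero_iff _ ratComb_injective).2 hv

theorem IsBlockBetween.isSuccessive {p : ℕ → ℕ} {x : ℕ → ℕ →₀ ℚ} (h : IsBlockBetween p x) :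
    IsSuccessive b p (ratComb b ∘ x) :=
  ⟨h.strictMono.monotone, fun k => proj_ratComb_of_mem_tail (h.mem_tail k),
    fun k => proj_ratComb_of_mem_head (h.mem_head k)⟩

end RationalCombinations

section RationalApproximation

variable {𝒲 : Type} [NormedAddCommGroup 𝒲] [NormedSpace ℝ 𝒲] [Module ℚ 𝒲]
  {b : SchauderBasis ℝ 𝒲}

theorem ratComb_suppIn (v : ℕ →₀ ℚ) : SuppIn b (ratComb b v) v.support := by
  refine ⟨fun i => v i, ?_⟩
  simp only [Finsupp.linearCombination_apply, Finsupp.sum, Rat.cast_smul_eq_qsmul]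

theorem IsBlockBetween.isBlockSeq {p : ℕ → ℕ} {x : ℕ → ℕ →₀ ℚ} (h : IsBlockBetween p x) :
    IsBlockSeq b (ratComb b ∘ x) :=
  ⟨fun k => ratComb_ne_zero (h.ne_zero k), fun k => (x k).support, fun k => ratComb_suppIn (x k),
    fun k _ hi _ hj => ((Finsupp.mem_supported ℚ _).1 (h.mem_head k) hi).trans_le
      ((Finsupp.mem_supported ℚ _).1 (h.mem_tail (k + 1)) hj)⟩

theorem exists_ratComb_seqEquiv_two {C : ℝ} (hC : ∀ n, ‖b.proj n‖ ≤ C) {p : ℕ → ℕ}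
    {x : ℕ → ℕ →₀ ℚ} (hx : IsBlockBetween p x) {y : ℕ → 𝒲} (hy : IsBlockSeq (ratComb b ∘ x) y) :
    CoeffBound (2 * C) y ∧ ∃ z : ℕ → ℕ →₀ ℚ, (∀ k, z k ∈ Submodule.span ℚ (Set.range x)) ∧
      (∀ k, z k ∈ tail ℚ k) ∧ ∀ k, SeqEquiv 2 k y (ratComb b ∘ z) := by
  obtain ⟨q, hq⟩ := hx.isSuccessive.of_isBlockSeq (b := b) hy
  have hC1 := one_le_of_norm_proj_le hC
  have hcoeff := hq.coeffBound hC
  obtain ⟨s, hs, hys⟩ := hy.exists_suppIn_Ico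
  have happrox (k : ℕ) : ∃ v ∈ Submodule.span ℚ (x '' Set.Ici k), ‖y k - ratComb b v‖ <
      1 / 2 / (2 * C) * (1 / 2) ^ (k + 1) * ‖y k‖ := by
    refine exists_mem_span_norm_sub_ratComb_lt (subset_closure ?_) ?_
    · obtain ⟨a, ha⟩ := hys k
      rw [ha]
      refine Submodule.sum_mem _ fun i hi => Submodule.smul_mem _ _ (Submodule.subset_span ?_)
      exact ⟨x i, ⟨i, (hs.id_le k).trans (Finset.mem_Ico.1 hi).1, rfl⟩, rfl⟩
    · have := norm_pos_iff.2 (hy.1 k)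
      positivity
  choose z hz hyz using happrox
  refine ⟨hcoeff, z, fun k => Submodule.span_mono (Set.image_subset_range _ _) (hz k),
    fun k => Submodule.span_le.2 ?_ (hz k), fun k => ?_⟩
  · rintro _ ⟨i, hi, rfl⟩
    exact tail_anti ((Set.mem_Ici.1 hi).trans (hx.strictMono.id_le i)) (hx.mem_tail i)
  · exact hcoeff.seqEquiv_two (by positivity) fun i _ => (hyz i).le

end RationalApproximation

/-! ### Replacing finitely many coordinates -/

section ReplaceHead

variable {R : Type*} [Ring R]

namespace Position

/-- The position obtained by moving all images along `L`. -/
noncomputable def map (L : (ℕ →₀ R) →ₗ[R] (ℕ →₀ R)) (p : Position R) : Position R where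
  space := p.space.map L
  graph := p.graph.map (LinearMap.id.prodMap L)
  fg_space := p.fg_space.map L
  fg_graph := p.fg_graph.map _
  map_snd_le := by
    rintro _ ⟨_, ⟨q, hq, rfl⟩, rfl⟩
    exact ⟨q.2, p.map_snd_le ⟨q, hq, rfl⟩, rfl⟩

variable (R) in
/-- The position at which no image has been chosen and `head R m` is available. -/
noncomputable def ofHead (m : ℕ) : Position R where
  space := head R m
  graph := ⊥
  fg_space := by
    rw [head, Finsupp.supported_eq_span_single]
    exact Submodule.fg_span ((Set.finite_Iio m).image _)
  fg_graph := Submodule.fg_bot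
  map_snd_le := by simp

variable {X S : Submodule R (ℕ →₀ R)} {n : ℕ} {p p' q : Position R}

theorem Step.map {L : (ℕ →₀ R) →ₗ[R] (ℕ →₀ R)} (hL : ∀ v ∈ tail R n, L v = v)
    (h : p.Step X n S p') : (p.map L).Step X n S (p'.map L) := by
  obtain ⟨hG, hS, F, hF, hFX, hp'⟩ := h
  have hFL : F.map L = F := by
    have hLF : L ∘ₗ F.subtype = F.subtype :=
      LinearMap.ext fun v => hL v ((hFX.trans inf_le_right) v.2)
    rw [← F.range_subtype, ← LinearMap.range_comp, hLF]
  refine ⟨Submodule.map_mono hG, fun s hs => ?_, F, hF, hFX, ?_⟩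
  · obtain ⟨q, hq, rfl⟩ := hS hs
    exact ⟨_, ⟨q, hq, rfl⟩, rfl⟩
  · calc p'.space.map L ≤ (p.space ⊔ F).map L := Submodule.map_mono hp'
      _ = p.space.map L ⊔ F := by rw [Submodule.map_sup, hFL]

theorem Step.of_space_le_sup {F : Submodule R (ℕ →₀ R)} (hF : F.FG) (hFX : F ≤ X ⊓ tail R n)
    (hspace : p.space ≤ q.space ⊔ F) (hgraph : q.graph ≤ p.graph) (h : p.Step X n S p') :
    q.Step X n S p' := by
  obtain ⟨hG, hS, F', hF', hF'X, hp'⟩ := h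
  refine ⟨hgraph.trans hG, hS, F ⊔ F', hF.sup hF', sup_le hFX hF'X, hp'.trans ?_⟩
  rw [← sup_assoc]
  exact sup_le_sup_right hspace F'

end Position

theorem tailGame_wins_map {N : (ℕ →₀ R) → ℝ} {K c : ℝ} (hK : 0 ≤ K) (hc : 0 ≤ c)
    {L : (ℕ →₀ R) →ₗ[R] (ℕ →₀ R)} {V : Submodule R (ℕ →₀ R)} {m : ℕ}
    (hL : ∀ v ∈ tail R m, L v = v) (hmV : tail R m ≤ V)
    (hLV : ∀ v ∈ V, N (L v) ≤ c * N v ∧ N v ≤ c * N (L v)) {Y X : Submodule R (ℕ →₀ R)}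
    {p : Position R} (hpV : p.space ≤ V) {ξ : Ordinal} (h : (tailGame N K Y X).Wins ξ p) :
    (tailGame N (K * c) Y X).Wins ξ (p.map L) := by
  refine h.simulate (fun p q => p.space ≤ V ∧ q = p.map L) ?_ ?_ ⟨hpV, rfl⟩
  · rintro p _ ⟨hpV, rfl⟩ hp _ ⟨⟨a, v⟩, hav, rfl⟩
    obtain ⟨hvL, hLv⟩ := hLV v (hpV (p.map_snd_le ⟨_, hav, rfl⟩))
    obtain ⟨hav₁, hav₂⟩ := hp _ hav
    constructor
    · calc N a ≤ K * N v := hav₁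
        _ ≤ K * (c * N (L v)) := mul_le_mul_of_nonneg_left hLv hK
        _ = K * c * N (L v) := by ring
    · calc N (L v) ≤ c * N v := hvL
        _ ≤ c * (K * N a) := mul_le_mul_of_nonneg_left hav₂ hc
        _ = K * c * N a := by ring
  · rintro p _ ⟨hpV, rfl⟩ ⟨n, S⟩
    refine ⟨⟨max n m, S⟩, fun p' hp' => ⟨p'.map L, ?_, ?_, rfl⟩⟩
    · exact (hp'.map fun v hv => hL v (tail_anti (le_max_right n m) hv)).mono
        (inf_le_inf_left X (tail_anti (le_max_left n m)))
    · obtain ⟨-, -, F, -, hFX, hp'⟩ := hp'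
      exact hp'.trans (sup_le hpV
        ((hFX.trans inf_le_right).trans ((tail_anti (le_max_right n m)).trans hmV)))

/-- The linear map that sends the unit vectors of index `i < m` to `f i` and fixes the others. -/
noncomputable def replaceHead (f : ℕ → ℕ →₀ R) (m : ℕ) : (ℕ →₀ R) →ₗ[R] (ℕ →₀ R) :=
  Finsupp.linearCombination R fun i => if i < m then f i else Finsupp.single i 1

theorem replaceHead_of_mem_tail {f : ℕ → ℕ →₀ R} {m : ℕ} {v : ℕ →₀ R} (hv : v ∈ tail R m) :
    replaceHead f m v = v := by
  rw [replaceHead, Finsupp.linearCombination_apply]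
  refine (Finsupp.sum_congr fun i hi => ?_).trans v.sum_single
  rw [if_neg (not_lt.2 (Set.mem_Ici.1 ((Finsupp.mem_supported R v).1 hv hi))), Finsupp.smul_single,
    smul_eq_mul, mul_one]

theorem map_replaceHead_head_le (f : ℕ → ℕ →₀ R) (m : ℕ) :
    (head R m).map (replaceHead f m) ≤ Submodule.span R (f '' Set.Iio m) := by
  rw [head, Finsupp.supported_eq_span_single, Submodule.map_span_le]
  rintro _ ⟨i, hi, rfl⟩
  rw [replaceHead, Finsupp.linearCombination_single, one_smul, if_pos (Set.mem_Iio.1 hi)]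
  exact Submodule.subset_span ⟨i, hi, rfl⟩

end ReplaceHead

section NormedReplaceHead

variable {E : Type*} [NormedAddCommGroup E] [NormedSpace ℝ E] {b : SchauderBasis ℝ E} {C : ℝ}

theorem isSuccessive_self : IsSuccessive b id b :=
  ⟨monotone_id, fun k => (b.proj_apply_basis_mem _ _).trans (if_neg (lt_irrefl k)),
    fun k => (b.proj_apply_basis_mem _ _).trans (if_pos (Nat.lt_succ_self k))⟩

theorem IsSuccessive.norm_sum_add_le {q : ℕ → ℕ} {u u' : ℕ → E} (hu : IsSuccessive b q u)
    (hC : ∀ n, ‖b.proj n‖ ≤ C) {m : ℕ} (huu' : ∀ i < m, ‖u' i‖ ≤ 2 * ‖u i‖) {t : E}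
    (ht : b.proj (q m) t = 0) (a : ℕ → ℝ) :
    ‖∑ i ∈ Finset.range m, a i • u' i + t‖ ≤
      (4 * m * C ^ 2 + 1 + C) * ‖∑ i ∈ Finset.range m, a i • u i + t‖ := by
  set s := ∑ i ∈ Finset.range m, a i • u i with hs
  have hC0 : 0 ≤ C := zero_le_one.trans (one_le_of_norm_proj_le hC)
  have hproj : b.proj (q m) (s + t) = s := by
    rw [map_add, ht, add_zero, hs, map_sum]
    refine Finset.sum_congr rfl fun i hi => ?_
    rw [map_smul, hu.proj_eq_self (hu.monotone (Finset.mem_range.1 hi))]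
  have hsC : ‖s‖ ≤ C * ‖s + t‖ := by
    simpa only [hproj] using (b.proj (q m)).le_of_opNorm_le (hC _) (s + t)
  have hterm (i : ℕ) (hi : i ∈ Finset.range m) : ‖a i • u' i‖ ≤ 4 * C ^ 2 * ‖s + t‖ := by
    have him := Finset.mem_range.1 hi
    calc ‖a i • u' i‖ = |a i| * ‖u' i‖ := by rw [norm_smul, Real.norm_eq_abs]
      _ ≤ |a i| * (2 * ‖u i‖) := mul_le_mul_of_nonneg_left (huu' i him) (abs_nonneg _)
      _ = 2 * (|a i| * ‖u i‖) := by ring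
      _ ≤ 2 * (2 * C * ‖s‖) := mul_le_mul_of_nonneg_left (hu.coeffBound hC m a i him) two_pos.le
      _ ≤ 2 * (2 * C * (C * ‖s + t‖)) := by gcongr
      _ = 4 * C ^ 2 * ‖s + t‖ := by ring
  have ht : ‖t‖ ≤ ‖s + t‖ + C * ‖s + t‖ := by
    calc ‖t‖ = ‖(s + t) - s‖ := by rw [add_sub_cancel_left]
      _ ≤ ‖s + t‖ + C * ‖s + t‖ := norm_sub_le_of_le le_rfl hsC
  calc ‖∑ i ∈ Finset.range m, a i • u' i + t‖
      ≤ ∑ i ∈ Finset.range m, 4 * C ^ 2 * ‖s + t‖ + (‖s + t‖ + C * ‖s + t‖) :=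
        norm_add_le_of_le (norm_sum_le_of_le _ hterm) ht
    _ = (4 * m * C ^ 2 + 1 + C) * ‖s + t‖ := by
        rw [Finset.sum_const, Finset.card_range, nsmul_eq_mul]
        ring

variable [Module ℚ E]

theorem map_eq_sum_of_mem_head (φ : (ℕ →₀ ℚ) →ₗ[ℚ] E) {m : ℕ} {v : ℕ →₀ ℚ}
    (hv : v ∈ head ℚ m) :
    φ v = ∑ i ∈ Finset.range m, (v i : ℝ) • φ (Finsupp.single i 1) := by
  have hsupp : v.support ⊆ Finset.range m := fun i hi =>
    Finset.mem_range.2 ((Finsupp.mem_supported ℚ v).1 hv hi)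
  simp only [Rat.cast_smul_eq_qsmul]
  conv_lhs => rw [← v.sum_single, Finsupp.sum_of_support_subset _ hsupp _ (by simp), map_sum]
  simp only [← map_smul, Finsupp.smul_single, smul_eq_mul, mul_one]

variable (b) in
/-- The norm that `E` induces on the coefficient vectors of rational combinations of `b`. -/
noncomputable def combNorm (v : ℕ →₀ ℚ) : ℝ := ‖ratComb b v‖

theorem combNorm_nonneg (v : ℕ →₀ ℚ) : 0 ≤ combNorm b v := norm_nonneg _

theorem combNorm_replaceHead_le (hC : ∀ n, ‖b.proj n‖ ≤ C) {p : ℕ → ℕ} {f : ℕ → ℕ →₀ ℚ}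
    (hf : IsBlockBetween p f) (hbf : ∀ i, ‖b i‖ ≤ combNorm b (f i))
    (hfb : ∀ i, combNorm b (f i) ≤ 2 * ‖b i‖) {m : ℕ} {v : ℕ →₀ ℚ}
    (hv : v ∈ head ℚ m ⊔ tail ℚ (p m)) :
    combNorm b (replaceHead f m v) ≤ (4 * m * C ^ 2 + 1 + C) * combNorm b v ∧
      combNorm b v ≤ (4 * m * C ^ 2 + 1 + C) * combNorm b (replaceHead f m v) := by
  obtain ⟨h, hh, t, ht, rfl⟩ := Submodule.mem_sup.1 hv
  have hm : m ≤ p m := hf.strictMono.id_le m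
  have htm : t ∈ tail ℚ m := tail_anti hm ht
  have hsum : ratComb b (h + t) = ∑ i ∈ Finset.range m, (h i : ℝ) • b i + ratComb b t := by
    rw [map_add, map_eq_sum_of_mem_head _ hh]
    simp only [Finsupp.linearCombination_single, one_smul]
  have hsum' : ratComb b (replaceHead f m (h + t)) =
      ∑ i ∈ Finset.range m, (h i : ℝ) • ratComb b (f i) + ratComb b t := by
    rw [map_add, map_add, replaceHead_of_mem_tail htm, ← LinearMap.comp_apply,
      map_eq_sum_of_mem_head _ hh]
    congr 1
    refine Finset.sum_congr rfl fun i hi => ?_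
    rw [LinearMap.comp_apply, replaceHead, Finsupp.linearCombination_single, one_smul,
      if_pos (Finset.mem_range.1 hi)]
  have ht' := proj_ratComb_of_mem_tail (b := b) ht
  rw [combNorm, combNorm, hsum, hsum']
  constructor
  · exact isSuccessive_self.norm_sum_add_le hC (fun i _ => hfb i)
      (proj_eq_zero_of_le hm ht') _
  · refine (hf.isSuccessive (b := b)).norm_sum_add_le hC (fun i _ => ?_) ht' _
    exact (hbf i).trans (le_mul_of_one_le_left (norm_nonneg _) one_le_two)

theorem exists_smul_combNorm_mem_Icc {v : ℕ →₀ ℚ} (hv : v ≠ 0) {r : ℝ} (hr : 0 < r) :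
    ∃ q : ℚ, q ≠ 0 ∧ combNorm b (q • v) ∈ Set.Icc r (2 * r) := by
  have hpos : 0 < combNorm b v := norm_pos_iff.2 (ratComb_ne_zero hv)
  obtain ⟨q, hq₁, hq₂⟩ := exists_rat_btwn
    (div_lt_div_of_pos_right (lt_mul_of_one_lt_left hr one_lt_two) hpos)
  have hq : (0 : ℝ) < q := (div_pos hr hpos).trans hq₁
  have hnorm : combNorm b (q • v) = q * combNorm b v := by
    rw [combNorm, map_smul, ← Rat.cast_smul_eq_qsmul ℝ, norm_smul, Real.norm_of_nonneg hq.le,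
      combNorm]
  refine ⟨q, Rat.cast_ne_zero.1 hq.ne', ?_⟩
  rw [hnorm]
  exact ⟨((div_lt_iff₀ hpos).1 hq₁).le, ((lt_div_iff₀ hpos).1 hq₂).le⟩

theorem MeetsTails.exists_isBlockBetween_combNorm {X : Submodule ℚ (ℕ →₀ ℚ)} (hX : MeetsTails X) :
    ∃ p f, IsBlockBetween p f ∧ ∀ k, f k ∈ X ∧ combNorm b (f k) ∈ Set.Icc ‖b k‖ (2 * ‖b k‖) :=
  exists_isBlockBetween (Q := fun k v => v ∈ X ∧ combNorm b v ∈ Set.Icc ‖b k‖ (2 * ‖b k‖))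
    fun k n => by
    obtain ⟨v, hvX, hvn, hv⟩ := hX.exists_mem_tail n
    obtain ⟨q, hq, hqv⟩ := exists_smul_combNorm_mem_Icc (b := b) hv
      (norm_pos_iff.2 (basis_ne_zero b k))
    exact ⟨q • v, Submodule.smul_mem _ _ hvn, smul_ne_zero hq hv, X.smul_mem q hvX, hqv⟩

-- Whatever the first demand `n` is, the initial space can be replaced by an isomorphic one beyond
-- `n`, at a cost independent of `n`.
theorem tailGame_wins_bot_of_wins_ofHead (hC : ∀ n, ‖b.proj n‖ ≤ C) {K : ℝ} (hK : 0 ≤ K)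
    {Y X : Submodule ℚ (ℕ →₀ ℚ)} (hX : MeetsTails X) {m : ℕ} {ξ : Ordinal}
    (h : (tailGame (combNorm b) K Y X).Wins ξ (.ofHead ℚ m)) :
    (tailGame (combNorm b) (K * (4 * m * C ^ 2 + 1 + C)) Y X).Wins ξ ⊥ := by
  refine ClockedGame.wins_iff.2 ⟨?_, fun η hη ⟨n, S⟩ => ?_⟩
  · rintro q hq
    obtain rfl : q = 0 := (Submodule.mem_bot ℚ).1 hq
    simp [combNorm]
  · obtain ⟨p, f, hf, hfX⟩ := (hX.inf_tail n).exists_isBlockBetween_combNorm (b := b)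
    have hm : m ≤ p m := hf.strictMono.id_le m
    have hL : ∀ v ∈ tail ℚ (p m), replaceHead f m v = v := fun v hv =>
      replaceHead_of_mem_tail (tail_anti hm hv)
    obtain ⟨p', hstep, hp'⟩ := h.exists_reply hη ⟨max n (p m), S⟩
    have hp'V : p'.space ≤ head ℚ m ⊔ tail ℚ (p m) := by
      obtain ⟨-, -, F, -, hFX, hp'F⟩ := hstep
      exact hp'F.trans (sup_le_sup_left
        ((hFX.trans inf_le_right).trans (tail_anti (le_max_right n (p m)))) _)
    have hC0 : 0 ≤ C := zero_le_one.trans (one_le_of_norm_proj_le hC)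
    refine ⟨p'.map (replaceHead f m), ?_, tailGame_wins_map hK (by positivity) hL le_sup_right
      (fun v => combNorm_replaceHead_le hC hf (fun i => (hfX i).2.1) fun i => (hfX i).2.2)
      hp'V hp'⟩
    refine Position.Step.of_space_le_sup (p := (Position.ofHead ℚ m).map (replaceHead f m))
      (Submodule.fg_span ((Set.finite_Iio m).image f))
      (Submodule.span_le.2 ?_) ((map_replaceHead_head_le f m).trans le_sup_right) bot_le
      ((hstep.map fun v hv => hL v (tail_anti (le_max_right n (p m)) hv)).mono
        (inf_le_inf_left X (tail_anti (le_max_left n (p m)))))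
    rintro _ ⟨i, -, rfl⟩
    exact (hfX i).1

end NormedReplaceHead

/-! ### Trees of embeddings of finite sequences -/

section DistortionTree

variable {R : Type*} [Ring R]

theorem exists_le_span_image_inter_Iio {M : Type*} [AddCommGroup M] [Module R M] {g : ℕ → M}
    {D : Set ℕ} {S : Submodule R M} (hS : S.FG) (h : S ≤ Submodule.span R (g '' D)) :
    ∃ n, S ≤ Submodule.span R (g '' (D ∩ Set.Iio n)) := by
  have hmono : Monotone fun n => Submodule.span R (g '' (D ∩ Set.Iio n)) := fun m n hmn =>
    Submodule.span_mono (Set.image_mono (Set.inter_subset_inter_right D (Set.Iio_subset_Iio hmn)))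
  have hsup : S ≤ ⨆ n, Submodule.span R (g '' (D ∩ Set.Iio n)) := by
    refine h.trans (Submodule.span_le.2 ?_)
    rintro _ ⟨i, hi, rfl⟩
    exact Submodule.mem_iSup_of_mem (i + 1)
      (Submodule.subset_span ⟨i, ⟨hi, Set.mem_Iio.2 i.lt_succ_self⟩, rfl⟩)
  obtain ⟨_, ⟨n, rfl⟩, hn⟩ := (Submodule.fg_iff_compact S).1 hS _ _ (Set.range_nonempty _)
    hmono.directed_le.directedOn_range isLUB_iSup hsup
  exact ⟨n, hn⟩

/-- The graph of the partial map that sends `y i` to the `i`-th entry of the list `u`. -/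
noncomputable def listGraph (y : ℕ → ℕ →₀ R) (u : List (ℕ →₀ R)) :
    Submodule R ((ℕ →₀ R) × (ℕ →₀ R)) :=
  Submodule.span R ((fun i => (y i, u.getD i 0)) '' Set.Iio u.length)

variable {y : ℕ → ℕ →₀ R} {u t : List (ℕ →₀ R)}

theorem listGraph_nil : listGraph y [] = ⊥ := by
  simp [listGraph]

theorem fg_listGraph : (listGraph y u).FG :=
  Submodule.fg_span ((Set.finite_Iio u.length).image _)

theorem listGraph_mono (h : u <+: t) : listGraph y u ≤ listGraph y t := by
  refine Submodule.span_le.2 ?_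
  rintro _ ⟨i, hi, rfl⟩
  refine Submodule.subset_span ⟨i, (Set.mem_Iio.1 hi).trans_le h.length_le, ?_⟩
  obtain ⟨s, rfl⟩ := h
  exact Prod.ext rfl (List.getD_append _ _ _ _ hi)

theorem listGraph_append_singleton (z : ℕ → ℕ →₀ R) (u : List (ℕ →₀ R)) (v : ℕ →₀ R) :
    listGraph z (u ++ [v]) = listGraph z u ⊔ Submodule.span R {(z u.length, v)} := by
  have hu : Set.EqOn (fun i => (z i, (u ++ [v]).getD i 0)) (fun i => (z i, u.getD i 0))
      (Set.Iio u.length) := fun i hi => Prod.ext rfl (List.getD_append _ _ _ _ hi)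
  rw [listGraph, List.length_append, List.length_singleton, ← Order.succ_eq_add_one,
    Order.Iio_succ_eq_insert, Set.image_insert_eq, Submodule.span_insert, hu.image_eq, sup_comm]
  simp [listGraph]

theorem mem_listGraph {q : (ℕ →₀ R) × (ℕ →₀ R)} :
    q ∈ listGraph y u ↔ ∃ r : ℕ → R, q = (∑ i ∈ Finset.range u.length, r i • y i,
      ∑ i ∈ Finset.range u.length, r i • u.getD i 0) := by
  rw [listGraph, ← Finset.coe_range, Submodule.mem_span_image_finset_iff_exists_fun']
  refine exists_congr fun r => ?_
  simp only [Prod.ext_iff, Prod.fst_sum, Prod.snd_sum, Prod.smul_fst, Prod.smul_snd, eq_comm]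

theorem map_snd_listGraph_le {X : Submodule R (ℕ →₀ R)} (h : ∀ v ∈ u, v ∈ X) :
    (listGraph y u).map (LinearMap.snd R _ _) ≤ X := by
  rw [listGraph, Submodule.map_span_le]
  rintro _ ⟨i, hi, rfl⟩
  change u.getD i 0 ∈ X
  exact List.getD_eq_getElem u 0 hi ▸ h _ (List.getElem_mem _)

theorem span_le_map_fst_listGraph {k : ℕ} (h : k ≤ u.length) :
    Submodule.span R (y '' Set.Iio k) ≤ (listGraph y u).map (LinearMap.fst R _ _) := by
  rw [listGraph, Submodule.map_span, ← Set.image_comp]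
  exact Submodule.span_mono (Set.image_mono (Set.Iio_subset_Iio h))

/-- The tree of finite sequences in `X` to which the initial segment of `y` of the same length can
be mapped with distortion at most `K`. -/
def distortionTree (N : (ℕ →₀ R) → ℝ) (K : ℝ) (X : Submodule R (ℕ →₀ R)) (y : ℕ → ℕ →₀ R) :
    Set (List (ℕ →₀ R)) :=
  {u | (∀ v ∈ u, v ∈ X) ∧ DistortionLE N K (listGraph y u)}

/-- In order to win the tail game from `p`, it is enough to have good replies for the demand `n`. -/
def IsSufficientDemand (N : (ℕ →₀ R) → ℝ) (K : ℝ) (Y X : Submodule R (ℕ →₀ R)) (n : ℕ)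
    (p : Position R) : Prop :=
  ∀ ξ : Ordinal.{0}, DistortionLE N K p.graph →
    (∀ η < ξ, ∀ S : Submodule R (ℕ →₀ R), S.FG → S ≤ Y →
      ∃ p', p.Step X n S p' ∧ (tailGame N K Y X).Wins η p') → (tailGame N K Y X).Wins ξ p

variable {N : (ℕ →₀ R) → ℝ} {K : ℝ} {Y X : Submodule R (ℕ →₀ R)}

theorem IsSufficientDemand.mono {m n : ℕ} {p : Position R} (h : IsSufficientDemand N K Y X m p)
    (hmn : m ≤ n) : IsSufficientDemand N K Y X n p := fun ξ hgood hreply =>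
  h ξ hgood fun η hη S hS hSY =>
    let ⟨p', hstep, hp'⟩ := hreply η hη S hS hSY
    ⟨p', hstep.mono (inf_le_inf_left X (tail_anti hmn)), hp'⟩

variable (N K Y X) in
theorem exists_isSufficientDemand (p : Position R) : ∃ n, IsSufficientDemand N K Y X n p := by
  have : Nonempty (ℕ × {S : Submodule R (ℕ →₀ R) // S.FG ∧ S ≤ Y}) :=
    ⟨0, ⊥, Submodule.fg_bot, bot_le⟩
  obtain ⟨κ, hκ⟩ := (tailGame N K Y X).exists_universal_challenge
  exact ⟨(κ p).1, fun ξ hgood hreply => hκ ξ p hgood fun η hη =>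
    hreply η hη (κ p).2 (κ p).2.2.1 (κ p).2.2.2⟩

variable (N Y X) in
theorem exists_isSufficientDemand_of_graph_eq [Countable R] (x : ℕ → ℕ →₀ R) :
    ∃ B : ℕ → ℕ, (∀ a, a ≤ B a) ∧ ∀ (K : ℕ) (G : Submodule R ((ℕ →₀ R) × (ℕ →₀ R))), G.FG →
      ∀ᶠ a in atTop, ∀ p : Position R, p.graph = G →
        (∃ D : Set ℕ, p.space = Submodule.span R (x '' (D ∩ Set.Iio a))) →
        IsSufficientDemand N K Y X (B a) p := by
  have := Position.countable_fg (R := R) (M := (ℕ →₀ R) × (ℕ →₀ R))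
  obtain ⟨code, hcode⟩ := exists_injective_nat {G : Submodule R ((ℕ →₀ R) × (ℕ →₀ R)) // G.FG}
  choose demand hdemand using fun q : ℕ × Position R => exists_isSufficientDemand N q.1 Y X q.2
  let P (a : ℕ) : Set (ℕ × Position R) := (fun q => (q.1, q.2.space, code ⟨_, q.2.fg_graph⟩)) ⁻¹'
    (Set.Iic a ×ˢ ((fun s => Submodule.span R (x '' s)) '' 𝒫 Set.Iio a) ×ˢ Set.Iic a)
  have hP (a : ℕ) : (P a).Finite := by
    refine Set.Finite.preimage (Function.Injective.injOn ?_) ((Set.finite_Iic a).prod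
      (((Set.finite_Iio a).powerset.image _).prod (Set.finite_Iic a)))
    rintro ⟨K, p⟩ ⟨K', p'⟩ h
    simp only [Prod.mk.injEq, hcode.eq_iff, Subtype.mk.injEq] at h
    exact Prod.ext h.1 (Position.ext h.2.1 h.2.2)
  choose B hB using fun a => ((hP a).image demand).bddAbove
  refine ⟨fun a => max a (B a), fun a => le_max_left _ _, fun K G hG => ?_⟩
  filter_upwards [eventually_ge_atTop K, eventually_ge_atTop (code ⟨G, hG⟩)]
  rintro a hK ha p rfl ⟨D, hD⟩
  exact (hdemand (K, p)).mono (le_max_of_le_right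
    (hB a ⟨(K, p), ⟨hK, ⟨_, Set.inter_subset_right, hD.symm⟩, ha⟩, rfl⟩))

theorem omega0_mul_add_nat_le {η ξ : Ordinal} (h : η < ξ) (d : ℕ) :
    Ordinal.omega0 * η + d ≤ Ordinal.omega0 * ξ := by
  calc Ordinal.omega0 * η + d ≤ Ordinal.omega0 * η + Ordinal.omega0 := by
        gcongr
        exact (Ordinal.natCast_lt_omega0 d).le
    _ = Ordinal.omega0 * Order.succ η := (Ordinal.mul_succ _ _).symm
    _ ≤ Ordinal.omega0 * ξ := by
        gcongr
        exact Order.succ_le_of_lt h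

theorem exists_fg_le_tail_span_le_sup {x : ℕ → ℕ →₀ R} (hx : ∀ i, x i ∈ tail R i) {D : Set ℕ}
    {m n n' : ℕ} (hD : Disjoint D (Set.Icc n m)) :
    ∃ F : Submodule R (ℕ →₀ R), F.FG ∧ F ≤ Submodule.span R (Set.range x) ⊓ tail R m ∧
      Submodule.span R (x '' (D ∩ Set.Iio n')) ≤ Submodule.span R (x '' (D ∩ Set.Iio n)) ⊔ F := by
  refine ⟨Submodule.span R (x '' Set.Ioo m n'), Submodule.fg_span ((Set.finite_Ioo m n').image x),
    le_inf (Submodule.span_mono (Set.image_subset_range _ _)) (Submodule.span_le.2 ?_), ?_⟩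
  · rintro _ ⟨i, hi, rfl⟩
    exact tail_anti hi.1.le (hx i)
  · rw [← Submodule.span_union, ← Set.image_union]
    refine Submodule.span_mono (Set.image_mono fun i ⟨hiD, hin'⟩ => ?_)
    rcases lt_or_ge i n with hin | hni
    · exact Or.inl ⟨hiD, hin⟩
    · exact Or.inr ⟨not_le.1 fun him => hD.notMem_of_mem_left hiD ⟨hni, him⟩, hin'⟩

-- The demand at a position whose space ends at `n` is `B n`; the gap `[n, B n]` in `D` lets the
-- images that the tree provides meet it.
theorem eventually_exists_tailGame_wins {K : ℕ} {B : ℕ → ℕ} {x : ℕ → ℕ →₀ R}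
    (hx : ∀ i, x i ∈ tail R i)
    (hB : ∀ G : Submodule R ((ℕ →₀ R) × (ℕ →₀ R)), G.FG → ∀ᶠ a in atTop, ∀ p : Position R,
      p.graph = G → (∃ D : Set ℕ, p.space = Submodule.span R (x '' (D ∩ Set.Iio a))) →
      IsSufficientDemand N K (Submodule.span R (Set.range y)) (Submodule.span R (Set.range x))
        (B a) p)
    {D M : Set ℕ} (hM : M.Infinite) (hD : ∀ n ∈ M, Disjoint D (Set.Icc n (B n))) {ξ : Ordinal.{0}}
    (h : (extensionGame (distortionTree N K (Submodule.span R (x '' D)) y)).Wins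
      (Ordinal.omega0 * ξ) u) :
    ∀ᶠ n in atTop, n ∈ M → ∃ p : Position R, p.graph = listGraph y u ∧
      p.space = Submodule.span R (x '' (D ∩ Set.Iio n)) ∧
      (tailGame N K (Submodule.span R (Set.range y))
        (Submodule.span R (Set.range x))).Wins ξ p := by
  induction ξ using WellFoundedLT.induction generalizing u with
  | _ ξ ih =>
    obtain ⟨n₀, hn₀⟩ := exists_le_span_image_inter_Iio (Submodule.fg_span u.finite_toSet)
      (Submodule.span_le.2 h.good.1)
    filter_upwards [eventually_ge_atTop n₀, hB _ fg_listGraph] with n hn hsuff hnM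
    have hmono : Submodule.span R (x '' (D ∩ Set.Iio n₀)) ≤
        Submodule.span R (x '' (D ∩ Set.Iio n)) := Submodule.span_mono
      (Set.image_mono (Set.inter_subset_inter_right D (Set.Iio_subset_Iio hn)))
    let p : Position R :=
      { space := Submodule.span R (x '' (D ∩ Set.Iio n))
        graph := listGraph y u
        fg_space := Submodule.fg_span (((Set.finite_Iio n).inter_of_right D).image x)
        fg_graph := fg_listGraph
        map_snd_le := map_snd_listGraph_le fun v hv => hmono (hn₀ (Submodule.subset_span hv)) }
    refine ⟨p, rfl, rfl, hsuff p rfl ⟨D, rfl⟩ ξ h.good.2 fun η hη S hS hSY => ?_⟩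
    obtain ⟨d, hd⟩ := exists_le_span_image_inter_Iio hS (Set.image_univ ▸ hSY)
    rw [Set.univ_inter] at hd
    obtain ⟨t, hut, hdt, ht⟩ := (h.of_le (omega0_mul_add_nat_le hη d)).exists_prefix_length_add_le
    obtain ⟨n', hn'M, hn'⟩ :=
      ((Nat.frequently_atTop_iff_infinite.2 hM).and_eventually (ih η hη ht)).exists
    obtain ⟨p', hgraph, hspace, hp'⟩ := hn' hn'M
    obtain ⟨F, hF, hFX, hsup⟩ := exists_fg_le_tail_span_le_sup hx (n' := n') (hD n hnM)
    refine ⟨p', ⟨?_, ?_, F, hF, hFX, hspace.trans_le hsup⟩, hp'⟩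
    · rw [hgraph]
      exact listGraph_mono hut
    · rw [hgraph]
      exact hd.trans (span_le_map_fst_listGraph ((Nat.le_add_left _ _).trans hdt))

end DistortionTree

theorem ClockedGame.Wins.mapIdx {V V' : Type*} {T : Set (List V)} {T' : Set (List V')}
    {f : ℕ → V → V'} (hf : ∀ l ∈ T, l.mapIdx f ∈ T') {ξ : Ordinal} {l : List V}
    (h : (extensionGame T).Wins ξ l) : (extensionGame T').Wins ξ (l.mapIdx f) := by
  refine h.simulate (fun l u => u = l.mapIdx f) ?_ ?_ rfl
  · rintro l _ rfl hl
    exact hf l hl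
  · rintro l _ rfl -
    refine ⟨(), ?_⟩
    rintro _ ⟨⟨s, rfl⟩, hne⟩
    refine ⟨_, ⟨⟨_, List.mapIdx_append.symm⟩, fun heq => hne ?_⟩, rfl⟩
    exact (List.prefix_append l s).eq_of_length (by simpa using congrArg List.length heq)

theorem getD_mapIdx_of_lt {V V' : Type*} (f : ℕ → V → V') {l : List V} {i : ℕ} (hi : i < l.length)
    (d : V) (d' : V') : (l.mapIdx f).getD i d' = f i (l.getD i d) := by
  rw [List.getD_eq_getElem _ _ (by simpa using hi), List.getElem_mapIdx,
    List.getD_eq_getElem _ _ hi]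

section TreeTransfer

variable {𝒲 : Type} [NormedAddCommGroup 𝒲] [NormedSpace ℝ 𝒲] [Module ℚ 𝒲]
  {b : SchauderBasis ℝ 𝒲}

theorem distortionLE_listGraph_iff {K : ℝ} (hK : 0 < K) {z : ℕ → ℕ →₀ ℚ} {u : List (ℕ →₀ ℚ)} :
    DistortionLE (combNorm b) K (listGraph z u) ↔
      SeqEquiv K u.length (ratComb b ∘ z) (fun i => ratComb b (u.getD i 0)) := by
  have hsum (r : ℕ → ℚ) (v : ℕ → ℕ →₀ ℚ) : combNorm b (∑ i ∈ Finset.range u.length, r i • v i) =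
      ‖∑ i ∈ Finset.range u.length, (r i : ℝ) • ratComb b (v i)‖ := by
    simp only [combNorm, map_sum, map_smul, Rat.cast_smul_eq_qsmul]
  constructor
  · intro h
    refine .of_rat hK fun r => ?_
    simpa only [hsum, Function.comp_apply] using h _ (mem_listGraph.2 ⟨r, rfl⟩)
  · rintro h q hq
    obtain ⟨r, rfl⟩ := mem_listGraph.1 hq
    simpa only [hsum, Function.comp_apply] using (seqEquiv_iff hK).1 h fun i => r i

theorem extensionGame_distortionTree_wins {D K K' : ℝ} (hD : 0 < D) (hK : 1 ≤ K)
    (hK' : 2 * K * 2 ≤ K') {y : ℕ → 𝒲} (hy : ∀ i, y i ≠ 0) (hcoeff : CoeffBound D y)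
    {z : ℕ → ℕ →₀ ℚ} (hyz : ∀ k, SeqEquiv 2 k y (ratComb b ∘ z)) {S : Set (ℕ →₀ ℚ)}
    {ξ : Ordinal}
    (h : (extensionGame (embTree y (closedSpan (ratComb b '' S)) K)).Wins ξ []) :
    (extensionGame (distortionTree (combNorm b) K' (Submodule.span ℚ S) z)).Wins ξ [] := by
  have hK0 : 0 < K := zero_lt_one.trans_le hK
  have happrox (i : ℕ) (v : 𝒲) : ∃ w ∈ Submodule.span ℚ S, v ∈ closedSpan (ratComb b '' S) →
      ‖v - ratComb b w‖ < 1 / (2 * K) / D * (1 / 2) ^ (i + 1) * ‖y i‖ := by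
    by_cases hv : v ∈ closedSpan (ratComb b '' S)
    · have := norm_pos_iff.2 (hy i)
      obtain ⟨w, hw, hvw⟩ := exists_mem_span_norm_sub_ratComb_lt hv
        (ε := 1 / (2 * K) / D * (1 / 2) ^ (i + 1) * ‖y i‖) (by positivity)
      exact ⟨w, hw, fun _ => hvw⟩
    · exact ⟨0, Submodule.zero_mem _, fun h => absurd h hv⟩
  choose f hfS hf using happrox
  refine ClockedGame.Wins.mapIdx (f := f) ?_ h
  rintro l ⟨hlmem, hl⟩
  refine ⟨?_, ?_⟩
  · rintro _ hw
    obtain ⟨i, hi, rfl⟩ := List.mem_mapIdx.1 hw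
    exact hfS _ _
  · refine ((distortionLE_listGraph_iff (by positivity)).2 ?_).of_le combNorm_nonneg hK'
    rw [List.length_mapIdx]
    refine (((hyz _).symm two_pos).trans two_pos hK0 (hl.symm hK0)).trans (by positivity) two_pos
      (seqEquiv_two_of_norm_sum_sub_le fun a => ?_)
    calc _ ≤ 1 / (2 * K) * ‖∑ i ∈ Finset.range l.length, a i • y i‖ := by
          refine hcoeff.norm_sum_le hD (by positivity) (fun i hi => ?_) a
          rw [getD_mapIdx_of_lt f hi 0]
          refine (hf i _ ?_).le
          exact List.getD_eq_getElem l 0 hi ▸ hlmem _ (List.getElem_mem hi)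
      _ ≤ 1 / (2 * K) * (K * ‖∑ i ∈ Finset.range l.length, a i • l.getD i 0‖) := by
          gcongr
          exact (hl a).2
      _ = _ := by field_simp

theorem extensionGame_embTree_wins {K : ℝ} (hK : 0 < K) {x y : ℕ → 𝒲} {w z : ℕ → ℕ →₀ ℚ}
    (hxz : ∀ k, SeqEquiv 2 k x (ratComb b ∘ z)) (hwy : ∀ k, SeqEquiv 2 k (ratComb b ∘ w) y)
    {Y : Submodule ℝ 𝒲} (hy : ∀ k, y k ∈ Y) {ξ : Ordinal}
    (h : (extensionGame (distortionTree (combNorm b) K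
      (Submodule.span ℚ (Set.range w)) z)).Wins ξ []) :
    (extensionGame (embTree x Y (2 * K * 2))).Wins ξ [] := by
  have hcoord (v : ℕ →₀ ℚ) : ∃ c : ℕ →₀ ℝ, v ∈ Submodule.span ℚ (Set.range w) →
      Finsupp.linearCombination ℝ (ratComb b ∘ w) c = ratComb b v := by
    by_cases hv : v ∈ Submodule.span ℚ (Set.range w)
    · have hspan : ratComb b v ∈ Submodule.span ℝ (Set.range (ratComb b ∘ w)) := by
        refine Submodule.span_le_restrictScalars ℚ ℝ _ ?_
        rw [Set.range_comp, ← Submodule.map_span]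
        exact Submodule.mem_map_of_mem hv
      obtain ⟨c, hc⟩ := Finsupp.mem_span_range_iff_exists_finsupp.1 hspan
      exact ⟨c, fun _ => hc⟩
    · exact ⟨0, fun h => absurd h hv⟩
  choose c hc using hcoord
  refine ClockedGame.Wins.mapIdx (f := fun _ v => Finsupp.linearCombination ℝ y (c v)) ?_ h
  rintro u ⟨humem, hu⟩
  refine ⟨?_, ?_⟩
  · rintro _ hv
    obtain ⟨i, hi, rfl⟩ := List.mem_mapIdx.1 hv
    exact Submodule.sum_mem _ fun j _ => Y.smul_mem _ (hy j)
  · rw [List.length_mapIdx]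
    have hcu : ∀ i < u.length, ratComb b (u.getD i 0) =
        Finsupp.linearCombination ℝ (ratComb b ∘ w) (c (u.getD i 0)) := fun i hi =>
      (hc _ (List.getD_eq_getElem u 0 hi ▸ humem _ (List.getElem_mem hi))).symm
    refine SeqEquiv.symm (by positivity) ((((hxz _).trans two_pos hK
      ((distortionLE_listGraph_iff hK).1 hu)).congr_right hcu).trans (by positivity) two_pos
      ((SeqEquiv.linearCombination two_pos hwy _ _).congr_right fun i hi => ?_))
    exact (getD_mapIdx_of_lt (fun _ v => Finsupp.linearCombination ℝ y (c v)) hi 0 0).symm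

end TreeTransfer

theorem exists_strictMono_intervalSeq {B : ℕ → ℕ} (hB : ∀ a, a ≤ B a) :
    ∃ a : ℕ → ℕ, StrictMono a ∧ IntervalSeq fun m => Finset.Icc (a m) (B (a m)) := by
  let a : ℕ → ℕ := Nat.rec 0 fun _ n => B n + 1
  have ha (m : ℕ) : a (m + 1) = B (a m) + 1 := rfl
  refine ⟨a, strictMono_nat_of_lt_succ fun m => ?_, fun m => ⟨_, _, hB _, rfl⟩, ?_⟩
  · exact ha m ▸ Nat.lt_succ_of_le (hB _)
  · intro m i hi j hj
    rw [Finset.mem_Icc] at hi hj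
    have := ha m
    omega

section NonTight

variable {𝒲 : Type} [NormedAddCommGroup 𝒲] [NormedSpace ℝ 𝒲] [Module ℚ 𝒲]
  {b : SchauderBasis ℝ 𝒲}

theorem residualSpace_comp (x : ℕ → ℕ →₀ ℚ) (I : ℕ → Finset ℕ) (A : Set ℕ) :
    residualSpace (ratComb b ∘ x) I A =
      closedSpan (ratComb b '' (x '' {n | ∀ m ∈ A, n ∉ I m})) := by
  rw [residualSpace, Set.image_image]
  congr 1
  ext v
  simp [eq_comm]

theorem exists_tailGame_wins_bot_of_forall_intervalSeq {C : ℝ} (hC : ∀ n, ‖b.proj n‖ ≤ C)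
    {p : ℕ → ℕ} {x z : ℕ → ℕ →₀ ℚ} (hx : IsBlockBetween p x) {α : Ordinal.{0}}
    (h : ∀ I, IntervalSeq I → ∃ (K : ℕ) (A : Set ℕ), A.Infinite ∧
      (extensionGame (distortionTree (combNorm b) K
        (Submodule.span ℚ (x '' {n | ∀ m ∈ A, n ∉ I m})) z)).Wins (Ordinal.omega0 * α) []) :
    ∃ K : ℕ, (tailGame (combNorm b) K (Submodule.span ℚ (Set.range z))
      (Submodule.span ℚ (Set.range x))).Wins α ⊥ := by
  obtain ⟨B, haB, hB⟩ := exists_isSufficientDemand_of_graph_eq (combNorm b)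
    (Submodule.span ℚ (Set.range z)) (Submodule.span ℚ (Set.range x)) x
  obtain ⟨a, ha, hI⟩ := exists_strictMono_intervalSeq haB
  obtain ⟨K, A, hA, hwin⟩ := h _ hI
  have haA : (a '' A).Infinite := hA.image ha.injective.injOn
  have hgap : ∀ n ∈ a '' A, Disjoint {n | ∀ m ∈ A, n ∉ Finset.Icc (a m) (B (a m))}
      (Set.Icc n (B n)) := by
    rintro _ ⟨m, hm, rfl⟩
    exact Set.disjoint_left.2 fun i hi him => hi m hm (Finset.mem_Icc.2 him)
  have hxtail (i : ℕ) : x i ∈ tail ℚ i := tail_anti (hx.strictMono.id_le i) (hx.mem_tail i)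
  obtain ⟨n, hnA, hn⟩ := ((Nat.frequently_atTop_iff_infinite.2 haA).and_eventually
    (eventually_exists_tailGame_wins hxtail (hB K) haA hgap hwin)).exists
  obtain ⟨q, hgraph, hspace, hq⟩ := hn hnA
  have hhead : q.space ≤ head ℚ (p n) := by
    rw [hspace, Submodule.span_le]
    rintro _ ⟨i, hi, rfl⟩
    exact head_mono (hx.strictMono.monotone (Nat.succ_le_of_lt hi.2)) (hx.mem_head i)
  have hofHead := tailGame_wins_mono combNorm_nonneg le_rfl le_rfl (.of_le le_rfl) hhead
    (q := .ofHead ℚ (p n)) (hgraph.trans listGraph_nil) hq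
  obtain ⟨K', hK'⟩ := exists_nat_ge (K * (4 * (p n) * C ^ 2 + 1 + C))
  exact ⟨K', tailGame_wins_mono combNorm_nonneg hK' le_rfl (.of_le le_rfl) le_rfl rfl
    (tailGame_wins_bot_of_wins_ofHead hC K.cast_nonneg hx.meetsTails_span hofHead)⟩

theorem exists_hasTailWin_of_not_isAlphaTight {C : ℝ} (hC : ∀ n, ‖b.proj n‖ ≤ C) {p : ℕ → ℕ}
    {x : ℕ → ℕ →₀ ℚ} (hx : IsBlockBetween p x) {α : Ordinal}
    (h : ¬IsAlphaTight (ratComb b ∘ x) (Ordinal.omega0 * α)) :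
    ∃ K : ℕ, HasTailWin (combNorm b) K α ⊥ (Submodule.span ℚ (Set.range x)) := by
  simp only [IsAlphaTight, not_forall, not_exists, not_and, exists_prop, not_le] at h
  obtain ⟨y, hy, hloose⟩ := h
  obtain ⟨hcoeff, z, hzx, hztail, hyz⟩ := exists_ratComb_seqEquiv_two hC hx hy
  have hz0 (k : ℕ) : z k ≠ 0 := fun hzk =>
    (hyz (k + 1)).ne_zero two_pos k.lt_succ_self (hy.1 k) (by simp [hzk])
  have hC0 : 0 < 2 * C := mul_pos two_pos (zero_lt_one.trans_le (one_le_of_norm_proj_le hC))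
  obtain ⟨K, hK⟩ := exists_tailGame_wins_bot_of_forall_intervalSeq (z := z) hC hx fun I hI => by
    obtain ⟨A, hA, hlt⟩ := hloose I hI
    obtain ⟨K₀, hK₀, hwin⟩ := lt_embIndex_iff.1 hlt
    obtain ⟨K, hK⟩ := exists_nat_ge (2 * K₀ * 2)
    rw [residualSpace_comp] at hwin
    exact ⟨K, A, hA, extensionGame_distortionTree_wins hC0 hK₀ hK hy.1 hcoeff hyz hwin⟩
  exact ⟨K, Submodule.span ℚ (Set.range z), Submodule.span_le.2 (Set.range_subset_iff.2 hzx),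
    fun k => (Submodule.ne_bot_iff _).2 ⟨z k, ⟨Submodule.subset_span ⟨k, rfl⟩, hztail k⟩, hz0 k⟩,
    hK⟩

end NonTight

/-! ### Minimality -/

theorem extensionGame_wins_of_embeddingGame_wins {R : Type*} [Ring R] {N : (ℕ →₀ R) → ℝ}
    (hN : ∀ v, 0 ≤ N v) {K K' : ℝ} (hK : K ≤ K') {Y W : Submodule R (ℕ →₀ R)} {z : ℕ → ℕ →₀ R}
    (hz : ∀ k, z k ∈ Y) {ξ : Ordinal} (h : (embeddingGame N K Y W).Wins ξ ⊥) :
    (extensionGame (distortionTree N K' W z)).Wins ξ [] := by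
  refine h.simulate (fun G u => listGraph z u ≤ G ∧ ∀ v ∈ u, v ∈ W) ?_ ?_ (by simp [listGraph_nil])
  · rintro G u ⟨huG, huW⟩ hG
    exact ⟨huW, fun q hq => hG.of_le hN hK q (huG hq)⟩
  · rintro G u ⟨huG, huW⟩ -
    refine ⟨⟨Submodule.span R {z u.length}, Submodule.fg_span (Set.finite_singleton _),
      (Submodule.span_singleton_le_iff_mem _ _).2 (hz _)⟩, ?_⟩
    rintro G' ⟨hGG', hzG', hG'W⟩
    obtain ⟨⟨_, v⟩, hv, rfl⟩ := (Submodule.span_singleton_le_iff_mem _ _).1 hzG'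
    have hvW : v ∈ W := hG'W (Submodule.mem_map_of_mem hv)
    refine ⟨u ++ [v], ⟨List.prefix_append _ _, by simp⟩, ?_, ?_⟩
    · rw [listGraph_append_singleton]
      exact sup_le (huG.trans hGG') ((Submodule.span_singleton_le_iff_mem _ _).2 hv)
    · simpa [or_imp, forall_and] using ⟨huW, hvW⟩

theorem countable_Iic_of_lt_ord_aleph_one {α : Ordinal.{0}} (hα : α < (Cardinal.aleph 1).ord) :
    Countable (Set.Iic α) := by
  have hIio : (Set.Iio α).Countable := by
    rw [← Cardinal.le_aleph0_iff_set_countable, Cardinal.mk_Iio_ordinal,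
      ← Cardinal.lift_aleph0.{1, 0}, Cardinal.lift_le, ← Order.lt_succ_iff, Cardinal.succ_aleph0]
    exact Cardinal.lt_ord.1 hα
  exact (Set.Iio_insert (a := α) ▸ hIio.insert α).to_subtype

section Minimal

variable {𝒲 : Type} [NormedAddCommGroup 𝒲] [NormedSpace ℝ 𝒲]

theorem exists_mem_ne_zero_proj_eq_zero {E : Type*} [NormedAddCommGroup E] [NormedSpace ℝ E]
    (b : SchauderBasis ℝ E) {Y : Submodule ℝ E} (hY : ¬FiniteDimensional ℝ Y) (n : ℕ) :
    ∃ y ∈ Y, y ≠ 0 ∧ b.proj n y = 0 := by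
  have : FiniteDimensional ℝ (b.proj n).range := by
    rw [b.range_proj_eq_span]
    exact .span_of_finite ℝ (Set.toFinite _)
  by_contra! h
  refine hY (.of_injective ((b.proj n).rangeRestrict.toLinearMap ∘ₗ Y.subtype) ?_)
  refine (injective_iff_map_eq_zero _).2 fun y hy => ?_
  by_contra hy0
  exact h y y.2 (by simpa using hy0) (congrArg Subtype.val hy)

theorem IsSuccessive.mem_closedSpan_image_Ici {b : SchauderBasis ℝ 𝒲} {q : ℕ → ℕ} {x : ℕ → 𝒲}
    (h : IsSuccessive b q x) {j : ℕ} {y : 𝒲} (hy : y ∈ closedSpan (Set.range x))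
    (hyj : b.proj (q j) y = 0) : y ∈ closedSpan (x '' Set.Ici j) := by
  let f : 𝒲 →L[ℝ] 𝒲 := ContinuousLinearMap.id ℝ 𝒲 - b.proj (q j)
  have hf : ∀ v ∈ Submodule.span ℝ (Set.range x), f v ∈ Submodule.span ℝ (x '' Set.Ici j) := by
    refine (Submodule.map_span_le f.toLinearMap _ _).2 ?_ |> fun h v hv => h ⟨v, hv, rfl⟩
    rintro _ ⟨i, rfl⟩
    rcases le_or_gt j i with hji | hij
    · have : f (x i) = x i := by simp [f, h.proj_eq_zero (h.monotone hji)]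
      exact this.symm ▸ Submodule.subset_span ⟨i, hji, rfl⟩
    · have : f (x i) = 0 := by simp [f, h.proj_eq_self (h.monotone (Nat.succ_le_of_lt hij))]
      exact this ▸ zero_mem _
  have : f y = y := by simp [f, hyj]
  exact this ▸ map_mem_closure f.continuous hy hf

theorem norm_sub_lt_mul_norm_of_norm_sub_lt {E : Type*} [SeminormedAddCommGroup E] {δ : ℝ}
    (hδ : δ ≤ 1) {y v : E} (h : ‖y - v‖ < δ / 2 * ‖y‖) : ‖v - y‖ < δ * ‖v‖ := by
  have htriangle := norm_le_norm_add_norm_sub' y v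
  have hδ0 : 0 < δ / 2 :=
    pos_of_mul_pos_left ((norm_nonneg _).trans_lt h) (norm_nonneg y)
  have hmul : δ / 2 * ‖y‖ ≤ δ / 2 * (‖v‖ + ‖y - v‖) := by gcongr
  rw [norm_sub_rev]
  nlinarith [norm_nonneg (y - v)]

variable [Module ℚ 𝒲] {b : SchauderBasis ℝ 𝒲}

theorem exists_isBlockBetween_seqEquiv_two {C : ℝ} (hC : ∀ n, ‖b.proj n‖ ≤ C) {p : ℕ → ℕ}
    {x : ℕ → ℕ →₀ ℚ} (hx : IsBlockBetween p x) {Y : Submodule ℝ 𝒲}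
    (hYx : Y ≤ closedSpan (Set.range (ratComb b ∘ x))) (hY : ¬FiniteDimensional ℝ Y) :
    ∃ q w, IsBlockBetween (R := ℚ) q w ∧ (∀ k, w k ∈ Submodule.span ℚ (Set.range x)) ∧
      ∃ y : ℕ → 𝒲, (∀ k, y k ∈ Y) ∧ ∀ k, SeqEquiv 2 k (ratComb b ∘ w) y := by
  have hC1 := one_le_of_norm_proj_le hC
  let δ (k : ℕ) : ℝ := 1 / 2 / (2 * C) * (1 / 2) ^ (k + 1)
  have hδ0 (k : ℕ) : 0 < δ k := by positivity
  have hδ1 (k : ℕ) : δ k ≤ 1 := mul_le_one₀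
    (by rw [div_div]; exact (div_le_one (by positivity)).2 (by linarith)) (by positivity)
    (pow_le_one₀ (by norm_num) (by norm_num))
  obtain ⟨q, w, hw, hwQ⟩ := exists_isBlockBetween (Q := fun k v =>
    v ∈ Submodule.span ℚ (Set.range x) ∧ ∃ y ∈ Y, ‖ratComb b v - y‖ < δ k * ‖ratComb b v‖)
    fun k n => by
      obtain ⟨y, hyY, hy0, hyn⟩ := exists_mem_ne_zero_proj_eq_zero b hY (p n)
      have hyx := hx.isSuccessive.mem_closedSpan_image_Ici (hYx hyY) hyn
      rw [Set.image_comp] at hyx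
      obtain ⟨v, hv, hyv⟩ := exists_mem_span_norm_sub_ratComb_lt hyx
        (mul_pos (half_pos (hδ0 k)) (norm_pos_iff.2 hy0))
      have hvy := norm_sub_lt_mul_norm_of_norm_sub_lt (hδ1 k) hyv
      refine ⟨v, Submodule.span_le.2 ?_ hv, ?_,
        Submodule.span_mono (Set.image_subset_range x _) hv, y, hyY, hvy⟩
      · rintro _ ⟨j, hj, rfl⟩
        exact tail_anti (hj.trans (hx.strictMono.id_le j)) (hx.mem_tail j)
      · rintro rfl
        exact (norm_nonneg _).not_gt (by simpa using hvy)
  choose hwx y hyY hwy using hwQ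
  exact ⟨q, w, hw, hwx, y, hyY, fun k => (hw.isSuccessive.coeffBound hC).seqEquiv_two
    (by positivity) fun i _ => (hwy i).le⟩

theorem isAlphaMinimal_of_embeddingGame_wins {C : ℝ} (hC : ∀ n, ‖b.proj n‖ ≤ C) {p : ℕ → ℕ}
    {x : ℕ → ℕ →₀ ℚ} (hx : IsBlockBetween p x) {X : Submodule ℚ (ℕ →₀ ℚ)} (hxX : ∀ k, x k ∈ X)
    {K : ℕ} {α : Ordinal} (h : ∀ W ≤ X, MeetsTails W →
      (embeddingGame (combNorm b) K X W).Wins α ⊥) :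
    IsAlphaMinimal (ratComb b ∘ x) (α + 1) := by
  intro y hy Y hYx hY
  have hspan : Submodule.span ℚ (Set.range x) ≤ X :=
    Submodule.span_le.2 (Set.range_subset_iff.2 hxX)
  obtain ⟨-, z, hzx, -, hyz⟩ := exists_ratComb_seqEquiv_two hC hx hy
  obtain ⟨q, w, hw, hwx, v, hvY, hwv⟩ := exists_isBlockBetween_seqEquiv_two hC hx hYx hY
  have hwin := h _ (Submodule.span_le.2 (Set.range_subset_iff.2 fun k => hspan (hwx k)))
    hw.meetsTails_span
  have hlt : (α : WithTop Ordinal) < embIndex y Y :=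
    lt_embIndex_iff.2 ⟨2 * (K + 1) * 2, by linarith [K.cast_nonneg (α := ℝ)],
      extensionGame_embTree_wins K.cast_add_one_pos hyz hwv hvY
        (extensionGame_wins_of_embeddingGame_wins combNorm_nonneg
          (le_add_of_nonneg_right zero_le_one) (fun k => hspan (hzx k)) hwin)⟩
  exact WithTop.succ_coe (a := α) ▸ Order.succ_le_of_lt hlt

end Minimal

/-- If `𝒲` is a Banach space with a Schauder basis and `α` is a countable
ordinal, then there is a block subspace `𝒳 = [x n] ⊆ 𝒲` that is either `ω·α`-tight or
`(α+1)`-minimal. -/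
theorem exists_tight_or_minimal_block_subspace
    (𝒲 : Type) [NormedAddCommGroup 𝒲] [NormedSpace ℝ 𝒲] [CompleteSpace 𝒲]
    (e : ℕ → 𝒲) (he : IsSchauderBasis e)
    (α : Ordinal) (hα : α < (Cardinal.aleph 1).ord) :
    ∃ x : ℕ → 𝒲, IsBlockSeq e x ∧
      (IsAlphaTight x (Ordinal.omega0 * α) ∨ IsAlphaMinimal x (α + 1)) := by
  obtain ⟨b, rfl⟩ := he.exists_schauderBasis
  obtain ⟨C, hC⟩ := b.exists_norm_proj_le
  let _ : Module ℚ 𝒲 := Module.compHom 𝒲 (algebraMap ℚ ℝ)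
  by_cases htight : ∃ p x, IsBlockBetween p x ∧ IsAlphaTight (ratComb b ∘ x) (Ordinal.omega0 * α)
  · obtain ⟨p, x, hx, hxtight⟩ := htight
    exact ⟨_, hx.isBlockSeq, .inl hxtight⟩
  have hloose (X : Submodule ℚ (ℕ →₀ ℚ)) (hX : MeetsTails X) :
      ∃ K : ℕ, HasTailWin (combNorm b) K α ⊥ X := by
    obtain ⟨p, x, hx, hxX⟩ := hX.exists_isBlockBetween_mem
    obtain ⟨K, hK⟩ := exists_hasTailWin_of_not_isAlphaTight hC hx fun h => htight ⟨p, x, hx, h⟩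
    have hspan := Submodule.span_le.2 (Set.range_subset_iff.2 hxX)
    exact ⟨K, hK.mono combNorm_nonneg (.of_le hspan)⟩
  have hcountable := countable_Iic_of_lt_ord_aleph_one hα
  obtain ⟨X, K, hX, hwin⟩ := exists_embeddingGame_wins combNorm_nonneg hcountable hloose
  obtain ⟨p, x, hx, hxX⟩ := hX.exists_isBlockBetween_mem
  exact ⟨_, hx.isBlockSeq, .inr (isAlphaMinimal_of_embeddingGame_wins hC hx hxX hwin)⟩

end Rosendal
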